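/- arXiv:1404.4485 — 3 statements merged into one kernel-verified Lean document; each statement's English description precedes it below -/
import Mathlib

section
/- For every n ≥ 2: an n-tuple (x₁,…,xₙ) ∈ (ℝ²)ⁿ minimizes w̄_n over (ℝ²)ⁿ if and only if (T(x₁),…,T(xₙ)) minimizes E_log over all n-tuples of points of S; and (x₁,…,xₙ) minimizes w_n over (ℝ²)ⁿ if and only if (T(x₁),…,T(xₙ), N) minimizes E_log over all (n+1)-tuples of points of S. (Here w_n, w̄_n and E_log are regarded as taking the value +∞ at tuples with coinciding points.) -/
/-!
The map `T` is the restriction to the plane `{z = 0}` of the inversion with centre `N` and radius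
`1`. Hence `‖T x - T z‖ = ‖x - z‖ / √((1 + |x|²) (1 + |z|²))` and `‖T x - N‖ = 1 / √(1 + |x|²)`,
and summing logarithms over pairs gives `w̄_n = E_log ∘ T` and `w_n = E_log (T ·, N)`. The image of
`T` is `S \ {N}`, and by an isometry of `S` any competing tuple of points of `S` can be made to
avoid `N` in the first case, or to end at `N` in the second, without changing its energy.
-/

open Real Classical

/-- The inverse stereographic projection onto the sphere of radius `1/2`
centered at `(0,0,1/2)`. -/
noncomputable def stereoT (x : EuclideanSpace ℝ (Fin 2)) : EuclideanSpace ℝ (Fin 3) :=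
  (WithLp.equiv 2 (Fin 3 → ℝ)).symm
    ![x 0 / (1 + ‖x‖^2), x 1 / (1 + ‖x‖^2), ‖x‖^2 / (1 + ‖x‖^2)]

/-- The north pole `N = (0,0,1)`. -/
noncomputable def northPole : EuclideanSpace ℝ (Fin 3) :=
  (WithLp.equiv 2 (Fin 3 → ℝ)).symm ![0, 0, 1]

/-- The center `(0,0,1/2)` of the sphere `S`. -/
noncomputable def sphereCenter : EuclideanSpace ℝ (Fin 3) :=
  (WithLp.equiv 2 (Fin 3 → ℝ)).symm ![0, 0, 1/2]

/-- The logarithmic energy, with value `+∞` at tuples with coinciding points. -/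
noncomputable def ElogE {m : ℕ} (y : Fin m → EuclideanSpace ℝ (Fin 3)) : EReal :=
  if Function.Injective y then
    ((-∑ i : Fin m, ∑ j : Fin m, if i ≠ j then Real.log (dist (y i) (y j)) else 0 : ℝ) : EReal)
  else ⊤

/-- The Hamiltonian `w_n`, with value `+∞` at tuples with coinciding points. -/
noncomputable def wHamE (n : ℕ) (x : Fin n → EuclideanSpace ℝ (Fin 2)) : EReal :=
  if Function.Injective x then
    ((-∑ i : Fin n, ∑ j : Fin n, (if i ≠ j then Real.log (dist (x i) (x j)) else 0)
      + (n : ℝ) * ∑ i : Fin n, Real.log (1 + ‖x i‖^2) : ℝ) : EReal)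
  else ⊤

/-- The Hamiltonian `w̄_n`, with value `+∞` at tuples with coinciding points. -/
noncomputable def wbarHamE (n : ℕ) (x : Fin n → EuclideanSpace ℝ (Fin 2)) : EReal :=
  if Function.Injective x then
    ((-∑ i : Fin n, ∑ j : Fin n, (if i ≠ j then Real.log (dist (x i) (x j)) else 0)
      + ((n : ℝ) - 1) * ∑ i : Fin n, Real.log (1 + ‖x i‖^2) : ℝ) : EReal)
  else ⊤

open EuclideanGeometry AffineSubspace Metric

theorem sum_sum_ite_ne_add {ι R : Type*} [Fintype ι] [DecidableEq ι] [Ring R] (g : ι → R) :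
    ∑ i, ∑ j, (if i ≠ j then g i + g j else 0) = 2 * (Fintype.card ι - 1) * ∑ i, g i := by
  have off_diag (i j : ι) : (if i ≠ j then g i + g j else 0) =
      g i + g j - if i = j then 2 * g i else 0 := by
    rcases eq_or_ne i j with rfl | h
    · simp [two_mul]
    · simp [h]
  simp only [off_diag, Finset.sum_sub_distrib, Finset.sum_add_distrib, Finset.sum_const,
    Finset.card_univ, Finset.sum_ite_eq, Finset.mem_univ, if_true, nsmul_eq_mul, ← Finset.mul_sum]
  noncomm_ring

theorem sum_sum_ite_ne_castSucc {M : Type*} [AddCommMonoid M] {n : ℕ}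
    (f : Fin (n + 1) → Fin (n + 1) → M) :
    ∑ i, ∑ j, (if i ≠ j then f i j else 0) =
      ∑ i : Fin n, ∑ j : Fin n, (if i ≠ j then f i.castSucc j.castSucc else 0) +
        ∑ i : Fin n, (f i.castSucc (Fin.last n) + f (Fin.last n) i.castSucc) := by
  simp only [Fin.sum_univ_castSucc, ne_eq, Fin.castSucc_inj, Fin.castSucc_ne_last,
    (Fin.castSucc_ne_last _).symm, not_true_eq_false, not_false_eq_true, if_true, if_false,
    Finset.sum_add_distrib, add_zero]
  abel

theorem exists_isometryEquiv_fixing_center {V P : Type*} [NormedAddCommGroup V]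
    [InnerProductSpace ℝ V] [MetricSpace P] [NormedAddTorsor V P] {c p q : P}
    (h : dist p c = dist q c) : ∃ e : P ≃ᵢ P, e c = c ∧ e p = q := by
  rw [dist_eq_norm_vsub V, dist_eq_norm_vsub V] at h
  let R := (ℝ ∙ ((p -ᵥ c) - (q -ᵥ c)))ᗮ.reflection
  have hR : R (p -ᵥ c) = q -ᵥ c := Submodule.reflection_sub h
  let φ := IsometryEquiv.vaddConst c
  refine ⟨(φ.symm.trans R.toIsometryEquiv).trans φ, ?_, ?_⟩
  · simp [φ]
  · simp [φ, hR]

theorem northPole_eq_single : northPole = EuclideanSpace.single 2 1 := by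
  ext i
  fin_cases i <;> simp [northPole]

theorem norm_northPole : ‖northPole‖ = 1 := by
  simp [northPole_eq_single]

theorem sphereCenter_eq_smul_northPole : sphereCenter = (1 / 2 : ℝ) • northPole := by
  ext i
  fin_cases i <;> simp [sphereCenter, northPole]

theorem northPole_mem_sphere : northPole ∈ sphere sphereCenter (1 / 2) := by
  have hsub : northPole - sphereCenter = (1 / 2 : ℝ) • northPole := by
    rw [sphereCenter_eq_smul_northPole]
    module
  rw [mem_sphere_iff_norm, hsub, norm_smul, norm_northPole]
  norm_num

/-- The inclusion of `ℝ²` into `ℝ³` as the plane `{z = 0}`, on which stereographic projection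
becomes an inversion. -/
noncomputable def planeInclusion : EuclideanSpace ℝ (Fin 2) →ₗᵢ[ℝ] EuclideanSpace ℝ (Fin 3) where
  toFun x := !₂[x 0, x 1, 0]
  map_add' x y := by ext i; fin_cases i <;> simp
  map_smul' a x := by ext i; fin_cases i <;> simp
  norm_map' x := by simp [EuclideanSpace.norm_eq, Fin.sum_univ_three]

theorem planeInclusion_apply (x : EuclideanSpace ℝ (Fin 2)) :
    planeInclusion x = !₂[x 0, x 1, 0] :=
  rfl

theorem dist_planeInclusion_northPole (x : EuclideanSpace ℝ (Fin 2)) :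
    dist (planeInclusion x) northPole = √(1 + ‖x‖ ^ 2) := by
  rw [EuclideanSpace.dist_eq, EuclideanSpace.norm_sq_eq]
  simp [planeInclusion_apply, northPole, Fin.sum_univ_three, Real.dist_eq, add_comm]

theorem planeInclusion_ne_northPole (x : EuclideanSpace ℝ (Fin 2)) :
    planeInclusion x ≠ northPole := by
  rw [← dist_pos, dist_planeInclusion_northPole]
  positivity

theorem range_planeInclusion :
    Set.range planeInclusion = (perpBisector northPole (-northPole) : Set _) := by
  have mem_bisector (v : EuclideanSpace ℝ (Fin 3)) :
      v ∈ perpBisector northPole (-northPole) ↔ v 2 = 0 := by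
    simp [mem_perpBisector_iff_inner_eq_zero, northPole_eq_single, ← neg_add', ← two_smul ℝ,
      inner_smul_right, EuclideanSpace.inner_single_right]
  ext v
  rw [SetLike.mem_coe, mem_bisector]
  constructor
  · rintro ⟨x, rfl⟩
    simp [planeInclusion_apply]
  · intro hv
    refine ⟨!₂[v 0, v 1], ?_⟩
    ext i
    fin_cases i <;> simp [planeInclusion_apply, hv]

theorem dist_neg_northPole_northPole : dist (-northPole) northPole = 2 := by
  rw [dist_eq_norm, ← neg_add', norm_neg, ← two_smul ℝ, norm_smul, norm_northPole]
  norm_num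

theorem neg_northPole_ne_northPole : -northPole ≠ northPole := by
  rw [← dist_pos, dist_neg_northPole_northPole]
  exact two_pos

theorem inversion_neg_northPole : inversion northPole 1 (-northPole) = sphereCenter := by
  rw [inversion, dist_neg_northPole_northPole, sphereCenter_eq_smul_northPole, vsub_eq_sub,
    vadd_eq_add]
  module

theorem stereoT_eq_inversion (x : EuclideanSpace ℝ (Fin 2)) :
    stereoT x = inversion northPole 1 (planeInclusion x) := by
  have height : ‖x‖ ^ 2 / (1 + ‖x‖ ^ 2) = -(1 + ‖x‖ ^ 2)⁻¹ + 1 := by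
    field_simp
    ring
  rw [inversion, dist_planeInclusion_northPole, div_pow, Real.sq_sqrt (by positivity)]
  ext i
  fin_cases i <;> simp [stereoT, planeInclusion_apply, northPole, height, div_eq_inv_mul]

theorem range_stereoT : Set.range stereoT = sphere sphereCenter (1 / 2) \ {northPole} := by
  rw [funext stereoT_eq_inversion, Set.range_comp', range_planeInclusion,
    image_inversion_perpBisector one_ne_zero neg_northPole_ne_northPole, inversion_neg_northPole,
    dist_neg_northPole_northPole, one_pow]

theorem stereoT_mem_sphere (x : EuclideanSpace ℝ (Fin 2)) :
    stereoT x ∈ sphere sphereCenter (1 / 2) :=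
  (range_stereoT.subset ⟨x, rfl⟩).1

theorem northPole_notMem_range_stereoT : northPole ∉ Set.range stereoT := by
  simp [range_stereoT]

theorem stereoT_injective : Function.Injective stereoT := by
  rw [funext stereoT_eq_inversion]
  exact (inversion_injective northPole one_ne_zero).comp planeInclusion.injective

theorem log_dist_stereoT {x z : EuclideanSpace ℝ (Fin 2)} (hxz : x ≠ z) :
    Real.log (dist (stereoT x) (stereoT z)) = Real.log (dist x z)
      - (Real.log (1 + ‖x‖ ^ 2) + Real.log (1 + ‖z‖ ^ 2)) / 2 := by
  have hx : 0 < 1 + ‖x‖ ^ 2 := by positivity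
  have hz : 0 < 1 + ‖z‖ ^ 2 := by positivity
  rw [stereoT_eq_inversion, stereoT_eq_inversion, dist_inversion_inversion
    (planeInclusion_ne_northPole x) (planeInclusion_ne_northPole z), planeInclusion.dist_map,
    dist_planeInclusion_northPole, dist_planeInclusion_northPole, one_pow, one_div,
    Real.log_mul (by positivity) (dist_ne_zero.2 hxz), Real.log_inv,
    Real.log_mul (by positivity) (by positivity), Real.log_sqrt hx.le, Real.log_sqrt hz.le]
  ring

theorem log_dist_stereoT_northPole (x : EuclideanSpace ℝ (Fin 2)) :
    Real.log (dist (stereoT x) northPole) = -Real.log (1 + ‖x‖ ^ 2) / 2 := by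
  rw [stereoT_eq_inversion, dist_inversion_center, dist_planeInclusion_northPole, one_pow, one_div,
    Real.log_inv, Real.log_sqrt (by positivity), neg_div]

theorem ElogE_isometry_comp {m : ℕ} {e : EuclideanSpace ℝ (Fin 3) → EuclideanSpace ℝ (Fin 3)}
    (he : Isometry e) (y : Fin m → EuclideanSpace ℝ (Fin 3)) : ElogE (e ∘ y) = ElogE y := by
  simp only [ElogE, he.injective.of_comp_iff, Function.comp_apply, he.dist_eq]

theorem ElogE_snoc {n : ℕ} {y : Fin n → EuclideanSpace ℝ (Fin 3)} {p : EuclideanSpace ℝ (Fin 3)}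
    (hp : p ∉ Set.range y) :
    ElogE (Fin.snoc y p : Fin (n + 1) → _) =
      ElogE y + ((-2 * ∑ i, Real.log (dist (y i) p) : ℝ) : EReal) := by
  by_cases hy : Function.Injective y
  · rw [ElogE, ElogE, if_pos (Fin.snoc_injective_iff.2 ⟨hy, hp⟩), if_pos hy, ← EReal.coe_add,
      sum_sum_ite_ne_castSucc]
    simp only [Fin.snoc_castSucc, Fin.snoc_last, dist_comm p, ← two_mul, ← Finset.mul_sum]
    congr 1
    ring
  · rw [ElogE, ElogE, if_neg fun h => hy (Fin.snoc_injective_iff.1 h).1, if_neg hy,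
      EReal.top_add_coe]

theorem wHamE_eq_wbarHamE_add {n : ℕ} (x : Fin n → EuclideanSpace ℝ (Fin 2)) :
    wHamE n x = wbarHamE n x + ((∑ i, Real.log (1 + ‖x i‖ ^ 2) : ℝ) : EReal) := by
  unfold wHamE wbarHamE
  split_ifs
  · rw [← EReal.coe_add]
    congr 1
    ring
  · rw [EReal.top_add_coe]

theorem ElogE_stereoT {n : ℕ} (x : Fin n → EuclideanSpace ℝ (Fin 2)) :
    ElogE (fun i => stereoT (x i)) = wbarHamE n x := by
  have inj_iff : Function.Injective (fun i => stereoT (x i)) ↔ Function.Injective x :=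
    stereoT_injective.of_comp_iff x
  unfold ElogE wbarHamE
  simp only [inj_iff]
  split_ifs with hx
  · let L (i : Fin n) := Real.log (1 + ‖x i‖ ^ 2)
    have pair_term (i j : Fin n) :
        (if i ≠ j then Real.log (dist (stereoT (x i)) (stereoT (x j))) else 0) =
          (if i ≠ j then Real.log (dist (x i) (x j)) else 0)
            - (if i ≠ j then L i + L j else 0) / 2 := by
      split_ifs with hij
      · exact log_dist_stereoT (hx.ne hij)
      · simp
    simp only [pair_term, Finset.sum_sub_distrib, ← Finset.sum_div, sum_sum_ite_ne_add,
      Fintype.card_fin]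
    congr 1
    ring
  · rfl

theorem ElogE_snoc_stereoT_northPole {n : ℕ} (x : Fin n → EuclideanSpace ℝ (Fin 2)) :
    ElogE (Fin.snoc (fun i => stereoT (x i)) northPole : Fin (n + 1) → _) = wHamE n x := by
  have avoids : northPole ∉ Set.range fun i => stereoT (x i) :=
    fun ⟨i, hi⟩ => northPole_notMem_range_stereoT ⟨x i, hi⟩
  simp only [ElogE_snoc avoids, ElogE_stereoT, wHamE_eq_wbarHamE_add, log_dist_stereoT_northPole,
    ← Finset.sum_div, Finset.sum_neg_distrib]
  ring_nf

theorem exists_isometryEquiv_comp_eq_stereoT_comp {ι : Type*} {y : ι → EuclideanSpace ℝ (Fin 3)}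
    (hy : ∀ i, y i ∈ sphere sphereCenter (1 / 2)) {p : EuclideanSpace ℝ (Fin 3)}
    (hp : p ∈ sphere sphereCenter (1 / 2)) (hpy : p ∉ Set.range y) :
    ∃ (e : EuclideanSpace ℝ (Fin 3) ≃ᵢ EuclideanSpace ℝ (Fin 3))
      (z : ι → EuclideanSpace ℝ (Fin 2)), e p = northPole ∧ e ∘ y = fun i => stereoT (z i) := by
  obtain ⟨e, he_center, he_pole⟩ :=
    exists_isometryEquiv_fixing_center (hp.trans northPole_mem_sphere.symm)
  have mem_range (i : ι) : e (y i) ∈ Set.range stereoT := by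
    rw [range_stereoT, ← he_pole]
    refine ⟨?_, fun h => hpy ⟨i, e.injective h⟩⟩
    rw [Metric.mem_sphere, ← he_center, e.dist_eq]
    exact hy i
  choose z hz using mem_range
  exact ⟨e, z, he_pole, funext fun i => (hz i).symm⟩

theorem exists_wbarHamE_eq_ElogE {n : ℕ} {y : Fin n → EuclideanSpace ℝ (Fin 3)}
    (hy : ∀ i, y i ∈ sphere sphereCenter (1 / 2)) : ∃ z, wbarHamE n z = ElogE y := by
  obtain ⟨p, hp, hpy⟩ := (Set.infinite_of_injective_forall_mem stereoT_injective
    stereoT_mem_sphere).exists_notMem_finite (Set.finite_range y)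
  obtain ⟨e, z, -, hz⟩ := exists_isometryEquiv_comp_eq_stereoT_comp hy hp hpy
  exact ⟨z, by rw [← ElogE_stereoT, ← hz, ElogE_isometry_comp e.isometry]⟩

theorem exists_wHamE_eq_ElogE {n : ℕ} {y : Fin (n + 1) → EuclideanSpace ℝ (Fin 3)}
    (hy : ∀ i, y i ∈ sphere sphereCenter (1 / 2)) (hinj : Function.Injective y) :
    ∃ z, wHamE n z = ElogE y := by
  rw [← Fin.snoc_init_self y] at hinj ⊢
  obtain ⟨e, z, he_pole, hz⟩ := exists_isometryEquiv_comp_eq_stereoT_comp (y := Fin.init y)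
    (fun i => hy i.castSucc) (hy (Fin.last n)) (Fin.snoc_injective_iff.1 hinj).2
  refine ⟨z, ?_⟩
  rw [← ElogE_isometry_comp e.isometry, Fin.comp_snoc, he_pole, hz, ElogE_snoc_stereoT_northPole]

/-- `(x₁,…,xₙ)` minimizes `w̄_n` iff `(T(x₁),…,T(xₙ))` minimizes `E_log` over `n`-tuples of
points of `S`, and `(x₁,…,xₙ)` minimizes `w_n` iff `(T(x₁),…,T(xₙ),N)` minimizes `E_log`
over `(n+1)`-tuples of points of `S`. -/
theorem minimize_wHam_iff (n : ℕ) (hn : 2 ≤ n) (x : Fin n → EuclideanSpace ℝ (Fin 2)) :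
    ((∀ z : Fin n → EuclideanSpace ℝ (Fin 2), wbarHamE n x ≤ wbarHamE n z) ↔
      (∀ y : Fin n → EuclideanSpace ℝ (Fin 3),
        (∀ i, y i ∈ Metric.sphere sphereCenter (1/2)) →
        ElogE (fun i => stereoT (x i)) ≤ ElogE y)) ∧
    ((∀ z : Fin n → EuclideanSpace ℝ (Fin 2), wHamE n x ≤ wHamE n z) ↔
      (∀ y : Fin (n+1) → EuclideanSpace ℝ (Fin 3),
        (∀ i, y i ∈ Metric.sphere sphereCenter (1/2)) →
        ElogE (Fin.snoc (fun i => stereoT (x i)) northPole) ≤ ElogE y)) := by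
  refine ⟨⟨fun h y hy => ?_, fun h z => ?_⟩, ⟨fun h y hy => ?_, fun h z => ?_⟩⟩
  · obtain ⟨z, hz⟩ := exists_wbarHamE_eq_ElogE hy
    rw [ElogE_stereoT, ← hz]
    exact h z
  · simpa only [ElogE_stereoT] using
      h (fun i => stereoT (z i)) fun i => stereoT_mem_sphere (z i)
  · by_cases hinj : Function.Injective y
    · obtain ⟨z, hz⟩ := exists_wHamE_eq_ElogE hy hinj
      rw [ElogE_snoc_stereoT_northPole, ← hz]
      exact h z
    · rw [ElogE.eq_def y, if_neg hinj]
      exact le_top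
  · have on_sphere : ∀ i, (Fin.snoc (fun i => stereoT (z i)) northPole : Fin (n + 1) → _) i ∈
        sphere sphereCenter (1 / 2) :=
      Fin.lastCases (by simpa using northPole_mem_sphere)
        fun i => by simpa using stereoT_mem_sphere (z i)
    simpa only [ElogE_snoc_stereoT_northPole] using h _ on_sphere
end

section
/- Suppose that for every n ≥ 2 the n-tuple (x₁ⁿ,…,xₙⁿ) ∈ (ℝ²)ⁿ minimizes w̄_n over (ℝ²)ⁿ (or, alternatively, minimizes w_n over (ℝ²)ⁿ). Then the empirical probability measures (1/n)∑_{i=1}^n δ_{xᵢⁿ} converge weakly, as n → ∞, to the measure μ_V. -/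
open Real Classical Filter MeasureTheory

/-- The equilibrium measure `μ_V`, with density `1/(π(1+|x|²)²)` w.r.t. Lebesgue measure. -/
noncomputable def muV : Measure (EuclideanSpace ℝ (Fin 2)) :=
  volume.withDensity fun x => ENNReal.ofReal (1 / (π * (1 + ‖x‖^2)^2))

/-!
Write `V z = log (1 + |z|²)` and let `x₁, …, xₙ` minimize `-∑_{i ≠ j} log |xᵢ - xⱼ| + β ∑ V xᵢ`,
where `β` is `n - 1` or `n`. Moving `xᵢ` to a point `y` cannot decrease the energy; summing these
inequalities over `i` gives
`(n - 1) ∑ⱼ log |y - xⱼ| ≤ ∑_{i ≠ j} log |xᵢ - xⱼ| + β / 2 * (n V y - ∑ V xᵢ)`.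
The pair sum is the logarithm of a squared Vandermonde determinant. Scaling its columns by square
roots of binomial coefficients makes the norm of the `i`-th row `(1 + |xᵢ|²) ^ ((n - 1) / 2)`, so
Hadamard's inequality bounds the pair sum by `(n - 1) ∑ V xᵢ - n² / 2 + O(n log n)`.

Hence the logarithmic potential `Uₙ` of the empirical measure satisfies
`Uₙ - V / 2 - κₙ ≤ o(1) (V + 1)` for a constant `κₙ`. Since `V / 2` is the potential of `μ_V`, the
left-hand side has `μ_V`-integral `0` for the right choice of `κₙ`, so the one-sided bound forces it
to tend to `0` in `L¹(μ_V)`.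

Let `ρ_s` be `μ_V` dilated by `√s`. Its density is `(2π)⁻¹ log |·|` convolved with its Laplacian,
which is dominated by the density of `μ_V`. So the convolutions of the empirical measures with `ρ_s`
converge to `μ_V ∗ ρ_s`, and their characteristic functions converge. As `s → 0` the characteristic
function of `ρ_s` tends to `1`, so it can be divided out, and Lévy's continuity theorem applies.
-/

section Hadamard

variable {𝕜 ι : Type*} [RCLike 𝕜] [Fintype ι] [DecidableEq ι]

open scoped ComplexOrder in
lemma norm_det_le_one_of_unit_rows {A : Matrix ι ι 𝕜} (hA : ∀ i, ∑ k, ‖A i k‖ ^ 2 = 1) :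
    ‖A.det‖ ≤ 1 := by
  have hpos : (A * A.conjTranspose).PosSemidef := Matrix.posSemidef_self_mul_conjTranspose A
  set eig := hpos.isHermitian.eigenvalues
  have htrace : ∑ i, eig i = Fintype.card ι := by
    have hdiag (i : ι) : (A * A.conjTranspose) i i = 1 := by
      simp only [Matrix.mul_apply, Matrix.conjTranspose_apply, RCLike.star_def, RCLike.mul_conj]
      exact_mod_cast congrArg ((↑) : ℝ → 𝕜) (hA i)
    have := hpos.isHermitian.trace_eq_sum_eigenvalues
    simp only [Matrix.trace, Matrix.diag, hdiag, Finset.sum_const, Finset.card_univ,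
      nsmul_eq_mul, mul_one] at this
    exact_mod_cast this.symm
  have hdet : ‖A.det‖ ^ 2 = ∏ i, eig i := by
    have := hpos.isHermitian.det_eq_prod_eigenvalues
    rw [Matrix.det_mul, Matrix.det_conjTranspose, RCLike.star_def, RCLike.mul_conj] at this
    exact_mod_cast this
  refine (sq_le_one_iff₀ (norm_nonneg _)).1 ?_
  calc ‖A.det‖ ^ 2 = ∏ i, eig i := hdet
    _ ≤ ∏ i, rexp (eig i - 1) := Finset.prod_le_prod
        (fun i _ => hpos.eigenvalues_nonneg i) fun i _ => by linarith [add_one_le_exp (eig i - 1)]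
    _ = 1 := by rw [← Real.exp_sum, Finset.sum_sub_distrib, htrace]; simp

lemma sq_norm_det_le_prod_rows (A : Matrix ι ι 𝕜) :
    ‖A.det‖ ^ 2 ≤ ∏ i, ∑ k, ‖A i k‖ ^ 2 := by
  set r : ι → ℝ := fun i => ∑ k, ‖A i k‖ ^ 2
  have hr (i : ι) : 0 ≤ r i := Finset.sum_nonneg fun k _ => sq_nonneg _
  by_cases hzero : ∃ i, r i = 0
  · obtain ⟨i, hi⟩ := hzero
    have hrow (k : ι) : A i k = 0 := by
      simpa using (Finset.sum_eq_zero_iff_of_nonneg fun k _ => sq_nonneg _).1 hi k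
    rw [Matrix.det_eq_zero_of_row_eq_zero i hrow, Finset.prod_eq_zero (Finset.mem_univ i) hi]
    simp
  push Not at hzero
  have hunit : ‖(Matrix.of fun i k => ((√(r i))⁻¹ : 𝕜) * A i k).det‖ ≤ 1 := by
    refine norm_det_le_one_of_unit_rows fun i => ?_
    simp only [Matrix.of_apply, norm_mul, norm_inv, RCLike.norm_ofReal, mul_pow, inv_pow, sq_abs,
      Real.sq_sqrt (hr i), ← Finset.mul_sum]
    exact inv_mul_cancel₀ (hzero i)
  rw [Matrix.det_mul_column, norm_mul, ← sq_le_one_iff₀ (by positivity), mul_pow, norm_prod,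
    ← Finset.prod_pow] at hunit
  simp only [norm_inv, RCLike.norm_ofReal, inv_pow, sq_abs, Real.sq_sqrt (hr _),
    Finset.prod_inv_distrib] at hunit
  rwa [inv_mul_le_iff₀ (Finset.prod_pos fun i _ => (hr i).lt_of_ne' (hzero i)), mul_one] at hunit

end Hadamard

lemma sum_log_norm_sub_eq_log_norm_det_vandermonde {𝕜 : Type*} [NormedField 𝕜] {n : ℕ}
    {x : Fin n → 𝕜} (hx : Function.Injective x) :
    ∑ i, ∑ j, log ‖x i - x j‖ = 2 * log ‖(Matrix.vandermonde x).det‖ := by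
  have hne (i j : Fin n) (hj : j ∈ Finset.Ioi i) : ‖x j - x i‖ ≠ 0 :=
    norm_ne_zero_iff.2 (sub_ne_zero.2 (hx.ne (Finset.mem_Ioi.1 hj).ne'))
  have hdiag (i : Fin n) : ∑ j, log ‖x i - x j‖ = ∑ j ∈ {i}ᶜ, log ‖x j - x i‖ := by
    rw [← Finset.sum_add_sum_compl {i}]
    simp [norm_sub_rev (x i)]
  have hdet : log ‖(Matrix.vandermonde x).det‖ = ∑ i, ∑ j ∈ Finset.Ioi i, log ‖x j - x i‖ := by
    rw [Matrix.det_vandermonde]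
    simp only [norm_prod]
    rw [log_prod fun i _ => Finset.prod_ne_zero_iff.2 (hne i)]
    exact Finset.sum_congr rfl fun i _ => log_prod (hne i)
  simp only [hdiag, hdet, ← Finset.sum_sum_Ioi_add_eq_sum_sum_off_diag, Finset.mul_sum]
  simp [norm_sub_rev (x _) (x _), two_mul]

/-- The logarithm of `∏ₖ (m choose k)`, which governs the minimal energy of `m + 1` points. -/
noncomputable def sumLogChoose (m : ℕ) : ℝ := ∑ k ∈ Finset.range (m + 1), log (m.choose k)

lemma sum_log_norm_sub_le {𝕜 : Type*} [RCLike 𝕜] {m : ℕ} {x : Fin (m + 1) → 𝕜}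
    (hx : Function.Injective x) :
    ∑ i, ∑ j, log ‖x i - x j‖ ≤ m * ∑ i, log (1 + ‖x i‖ ^ 2) - sumLogChoose m := by
  have hchoose (k : Fin (m + 1)) : 0 < (m.choose k : ℝ) :=
    Nat.cast_pos.2 (Nat.choose_pos (Nat.lt_succ_iff.1 k.2))
  have hrow (i : Fin (m + 1)) :
      ∑ k : Fin (m + 1), ‖(Matrix.vandermonde x * Matrix.diagonal
        fun k : Fin (m + 1) => ((√(m.choose k) : ℝ) : 𝕜)) i k‖ ^ 2 = (1 + ‖x i‖ ^ 2) ^ m := by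
    simp only [Matrix.mul_diagonal, Matrix.vandermonde_apply, norm_mul, norm_pow,
      RCLike.norm_ofReal, mul_pow, sq_abs, Real.sq_sqrt (hchoose _).le]
    rw [add_comm 1, add_pow, Finset.sum_range]
    simp [← pow_mul, mul_comm]
  have hhadamard := sq_norm_det_le_prod_rows
    (Matrix.vandermonde x * Matrix.diagonal fun k : Fin (m + 1) => ((√(m.choose k) : ℝ) : 𝕜))
  simp only [hrow] at hhadamard
  rw [Matrix.det_mul, Matrix.det_diagonal, norm_mul, mul_pow, norm_prod, ← Finset.prod_pow]
    at hhadamard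
  simp only [RCLike.norm_ofReal, sq_abs, Real.sq_sqrt (hchoose _).le]
    at hhadamard
  have hdet : ‖(Matrix.vandermonde x).det‖ ≠ 0 :=
    norm_ne_zero_iff.2 (Matrix.det_vandermonde_ne_zero_iff.2 hx)
  have hprod : 0 < ∏ k : Fin (m + 1), (m.choose k : ℝ) := Finset.prod_pos fun k _ => hchoose k
  have hlog := log_le_log (by positivity) hhadamard
  rw [log_mul (by positivity) hprod.ne', log_pow, log_prod fun k _ => (hchoose k).ne',
    log_prod fun i _ => by positivity] at hlog
  simp only [log_pow, ← Finset.mul_sum] at hlog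
  rw [sum_log_norm_sub_eq_log_norm_det_vandermonde hx, sumLogChoose, Finset.sum_range]
  push_cast at hlog
  linarith

lemma log_factorial_le (m : ℕ) : log (m + 1).factorial ≤ (m + 2) * log (m + 1) - m := by
  induction m with
  | zero => simp
  | succ m ih =>
    have hlog : 1 / (m + 2 : ℝ) ≤ log (m + 2) - log (m + 1) := by
      rw [← log_div (by positivity) (by positivity)]
      convert one_sub_inv_le_log_of_pos (show 0 < (m + 2) / (m + 1 : ℝ) by positivity) using 1
      field_simp
      ring
    have hmul := mul_le_mul_of_nonneg_left hlog (show (0 : ℝ) ≤ m + 2 by positivity)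
    rw [mul_one_div_cancel (by positivity)] at hmul
    rw [Nat.factorial_succ, Nat.cast_mul, log_mul (by positivity) (by positivity)]
    push_cast
    rw [show (m : ℝ) + 1 + 1 = m + 2 by ring]
    linarith

lemma sumLogChoose_succ (m : ℕ) :
    sumLogChoose (m + 1)
      = sumLogChoose m + ((m + 1) * log (m + 1) - log (m + 1).factorial) := by
  have hstep (k : ℕ) (hk : k ∈ Finset.range (m + 1)) :
      log ((m + 1).choose k) = log (m.choose k) + (log (m + 1) - log ((m - k : ℕ) + 1)) := by
    have hkm : k ≤ m := Nat.lt_succ_iff.1 (Finset.mem_range.1 hk)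
    have hpos : 0 < (m.choose k : ℝ) := Nat.cast_pos.2 (Nat.choose_pos hkm)
    have hpos_succ : 0 < ((m + 1).choose k : ℝ) := Nat.cast_pos.2 (Nat.choose_pos (by omega))
    have hchoose : (m.choose k : ℝ) * (m + 1) = (m + 1).choose k * ((m - k : ℕ) + 1) := by
      have := Nat.choose_mul_succ_eq m k
      rw [Nat.succ_sub hkm] at this
      exact_mod_cast this
    have := congrArg log hchoose
    rw [log_mul hpos.ne' (by positivity), log_mul hpos_succ.ne' (by positivity)] at this
    linarith
  have hfactorial :
      ∑ k ∈ Finset.range (m + 1), log ((m - k : ℕ) + 1) = log (m + 1).factorial := by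
    rw [← Finset.prod_range_add_one_eq_factorial, Nat.cast_prod,
      log_prod fun k _ => by positivity]
    simpa using Finset.sum_range_reflect (fun k => log ((k : ℝ) + 1)) (m + 1)
  rw [sumLogChoose, Finset.sum_range_succ, Finset.sum_congr rfl hstep, Finset.sum_add_distrib,
    Finset.sum_sub_distrib, hfactorial]
  simp [sumLogChoose]

lemma le_sumLogChoose (m : ℕ) : m * (m + 1) / 2 - m * (1 + log m) ≤ sumLogChoose m := by
  induction m with
  | zero => simp [sumLogChoose]
  | succ m ih =>
    have hmono : m * log m ≤ m * log (m + 1) := by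
      rcases m.eq_zero_or_pos with rfl | hm
      · simp
      · gcongr
        simp
    rw [sumLogChoose_succ]
    push_cast
    linarith [log_factorial_le m]

section Radial

lemma integrableOn_polarCoord_symm {g : ℂ → ℝ} (hg : Integrable g) :
    IntegrableOn (fun p : ℝ × ℝ => p.1 * g (Complex.polarCoord.symm p)) polarCoord.target := by
  have hplane : Integrable (g ∘ Complex.measurableEquivRealProd.symm) :=
    Complex.volume_preserving_equiv_real_prod.symm.integrable_comp_emb
      Complex.measurableEquivRealProd.symm.measurableEmbedding |>.2 hg
  have hpolar := (integrableOn_image_iff_integrableOn_abs_det_fderiv_smul volume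
    polarCoord.open_target.measurableSet
    (fun p _ => (hasFDerivAt_polarCoord_symm p).hasFDerivWithinAt) polarCoord.symm.injOn
    (g ∘ Complex.measurableEquivRealProd.symm)).1 hplane.integrableOn
  refine hpolar.congr_fun (fun p hp => ?_) polarCoord.open_target.measurableSet
  simp only [det_fderivPolarCoordSymm, abs_of_pos (show 0 < p.1 from hp.1)]
  rfl

lemma integral_Ioo_polarCoord_symm (g : ℂ → ℝ) (r : ℝ) :
    ∫ θ in Set.Ioo (-π) π, g (Complex.polarCoord.symm (r, θ)) = 2 * π * circleAverage g 0 r := by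
  have hcircle (θ : ℝ) : Complex.polarCoord.symm (r, θ) = circleMap 0 r θ := by
    simp [circleMap, Complex.exp_mul_I]
  have hshift : ∫ θ in 0..2 * π, g (circleMap 0 r (θ + -π)) =
      ∫ θ in -π..π, g (circleMap 0 r θ) := by
    rw [intervalIntegral.integral_comp_add_right fun θ => g (circleMap 0 r θ)]
    congr 1 <;> ring
  rw [circleAverage_eq_integral_add (-π), hshift, ← integral_Ioc_eq_integral_Ioo,
    ← intervalIntegral.integral_of_le (by linarith [pi_pos]), smul_eq_mul,
    mul_inv_cancel_left₀ two_pi_pos.ne']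
  simp only [hcircle]

lemma integrableOn_mul_circleAverage {g : ℂ → ℝ} (hg : Integrable g) :
    IntegrableOn (fun r => r * circleAverage g 0 r) (Set.Ioi 0) := by
  have hpolar := integrableOn_polarCoord_symm hg
  rw [polarCoord_target, IntegrableOn, Measure.volume_eq_prod, ← Measure.prod_restrict] at hpolar
  refine (hpolar.integral_prod_left.div_const (2 * π)).congr (.of_forall fun r => ?_)
  simp only [integral_const_mul, integral_Ioo_polarCoord_symm]
  field_simp

lemma integral_eq_integral_circleAverage {g : ℂ → ℝ} (hg : Integrable g) :
    ∫ z, g z = 2 * π * ∫ r in Set.Ioi 0, r * circleAverage g 0 r := by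
  have hpolar := integrableOn_polarCoord_symm hg
  rw [polarCoord_target] at hpolar
  rw [← Complex.integral_comp_polarCoord_symm, polarCoord_target, Measure.volume_eq_prod,
    ← integral_const_mul]
  refine (setIntegral_prod _ hpolar).trans (integral_congr_ae (.of_forall fun r => ?_))
  simp only [integral_const_mul, integral_Ioo_polarCoord_symm]
  ring

lemma integrableOn_mul_comp_sq_iff {ρ : ℝ → ℝ} :
    IntegrableOn (fun r => r * ρ (r ^ 2)) (Set.Ioi 0) ↔ IntegrableOn ρ (Set.Ioi 0) := by
  rw [← integrableOn_Ioi_comp_rpow_iff ρ two_ne_zero, IntegrableOn, IntegrableOn,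
    ← integrable_const_mul_iff (isUnit_iff_ne_zero.2 (two_ne_zero' ℝ))]
  norm_num [mul_assoc, rpow_ofNat]

lemma integral_mul_comp_sq (ρ : ℝ → ℝ) :
    ∫ r in Set.Ioi 0, r * ρ (r ^ 2) = (∫ t in Set.Ioi 0, ρ t) / 2 := by
  rw [← integral_comp_rpow_Ioi_of_pos (g := ρ) two_pos]
  norm_num [mul_assoc, integral_const_mul]

lemma integrable_comp_norm_sq_iff {ρ : ℝ → ℝ} :
    Integrable (fun z : ℂ => ρ (‖z‖ ^ 2)) ↔ IntegrableOn ρ (Set.Ioi 0) := by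
  rw [integrable_fun_norm_addHaar volume (f := fun r => ρ (r ^ 2)),
    ← integrableOn_mul_comp_sq_iff (ρ := ρ), Complex.finrank_real_complex]
  norm_num

lemma integral_comp_norm_sq (ρ : ℝ → ℝ) :
    ∫ z : ℂ, ρ (‖z‖ ^ 2) = π * ∫ t in Set.Ioi 0, ρ t := by
  have := integral_fun_norm_addHaar (volume : Measure ℂ) fun r => ρ (r ^ 2)
  simp only [Complex.finrank_real_complex, Nat.add_one_sub_one, pow_one, smul_eq_mul,
    integral_mul_comp_sq] at this
  rw [this]
  simp only [Measure.real, Complex.volume_ball, ENNReal.ofReal_one, one_pow, one_mul,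
    ENNReal.coe_toReal, NNReal.coe_real_pi, nsmul_eq_mul, Nat.cast_ofNat]
  ring

lemma integrable_comp_norm_sq_of_hasDerivAt_of_nonneg {G ρ : ℝ → ℝ} {l : ℝ}
    (hG : ∀ t, 0 ≤ t → HasDerivAt G (ρ t) t) (hρ : ∀ t, 0 ≤ t → 0 ≤ ρ t)
    (hl : Tendsto G atTop (nhds l)) : Integrable fun z : ℂ => ρ (‖z‖ ^ 2) :=
  integrable_comp_norm_sq_iff.2 <| integrableOn_Ioi_deriv_of_nonneg
    (hG 0 le_rfl).continuousAt.continuousWithinAt (fun t ht => hG t (le_of_lt ht))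
    (fun t ht => hρ t (le_of_lt ht)) hl

lemma integral_comp_norm_sq_of_hasDerivAt {G ρ : ℝ → ℝ} {l : ℝ}
    (hG : ∀ t, 0 ≤ t → HasDerivAt G (ρ t) t) (hint : Integrable fun z : ℂ => ρ (‖z‖ ^ 2))
    (hl : Tendsto G atTop (nhds l)) : ∫ z : ℂ, ρ (‖z‖ ^ 2) = π * (l - G 0) := by
  rw [integral_comp_norm_sq, integral_Ioi_of_hasDerivAt_of_tendsto
    (hG 0 le_rfl).continuousAt.continuousWithinAt (fun t ht => hG t (le_of_lt ht))
    (integrable_comp_norm_sq_iff.1 hint) hl]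

open scoped Real in
lemma circleAverage_comp_norm_sq_mul_log_norm_sub (ρ : ℝ → ℝ) (a : ℂ) {r : ℝ} (hr : 0 < r) :
    circleAverage (fun z => ρ (‖z‖ ^ 2) * log ‖z - a‖) 0 r
      = ρ (r ^ 2) * log (max (r ^ 2) (‖a‖ ^ 2)) / 2 := by
  have hnorm (θ : ℝ) : ‖circleMap 0 r θ‖ = r := by simp [abs_of_pos hr]
  have hlog : log r + log⁺ (r⁻¹ * ‖a‖) = log (max (r ^ 2) (‖a‖ ^ 2)) / 2 := by
    have hmax : max (r ^ 2) (‖a‖ ^ 2) = max r ‖a‖ ^ 2 := by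
      rcases le_total r ‖a‖ with h | h
      · rw [max_eq_right h, max_eq_right (by gcongr)]
      · rw [max_eq_left h, max_eq_left (by gcongr)]
    rw [posLog_eq_log_max_one (by positivity), ← log_mul hr.ne' (by positivity),
      mul_max_of_nonneg _ _ hr.le, mul_one, mul_inv_cancel_left₀ hr.ne', hmax, log_pow]
    push_cast
    ring
  have haverage :=
    circleAverage_log_norm_sub_const_eq_log_radius_add_posLog (a := a) (c := 0) hr.ne'
  rw [zero_sub, norm_neg, hlog] at haverage
  simp only [circleAverage_def, smul_eq_mul, hnorm] at haverage ⊢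
  rw [intervalIntegral.integral_const_mul, mul_left_comm, haverage]
  ring

variable {ρ : ℝ → ℝ} {a : ℂ}

lemma integrableOn_mul_log_max (h : Integrable fun z : ℂ => ρ (‖z‖ ^ 2) * log ‖z - a‖) :
    IntegrableOn (fun t => ρ t * log (max t (‖a‖ ^ 2))) (Set.Ioi 0) := by
  refine integrableOn_mul_comp_sq_iff.1 (IntegrableOn.congr_fun
    ((integrableOn_mul_circleAverage h).const_mul 2) (fun r hr => ?_) measurableSet_Ioi)
  simp only [circleAverage_comp_norm_sq_mul_log_norm_sub ρ a hr]
  ring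

lemma integral_comp_norm_sq_mul_log_norm_sub
    (h : Integrable fun z : ℂ => ρ (‖z‖ ^ 2) * log ‖z - a‖) :
    ∫ z : ℂ, ρ (‖z‖ ^ 2) * log ‖z - a‖
      = π / 2 * ∫ t in Set.Ioi 0, ρ t * log (max t (‖a‖ ^ 2)) := by
  have haverage : ∫ r in Set.Ioi 0, r * circleAverage (fun z => ρ (‖z‖ ^ 2) * log ‖z - a‖) 0 r
      = ∫ r in Set.Ioi 0, r * (ρ (r ^ 2) * log (max (r ^ 2) (‖a‖ ^ 2)) / 2) :=
    setIntegral_congr_fun measurableSet_Ioi fun r hr => by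
      simp only [circleAverage_comp_norm_sq_mul_log_norm_sub ρ a hr]
  rw [integral_eq_integral_circleAverage h, haverage,
    integral_mul_comp_sq fun t => ρ t * log (max t (‖a‖ ^ 2)) / 2, integral_div]
  ring

end Radial

/-- In the variable `t = r²` the two-dimensional Laplacian is `4 (t f')'`, and `log (max t A)` is
the radial average of twice the logarithmic kernel: this is Green's representation formula. -/
lemma integral_mul_log_max {f g u : ℝ → ℝ} (hf : ∀ t, 0 ≤ t → HasDerivAt f (g t) t)
    (hg : ∀ t, 0 ≤ t → HasDerivAt (fun t => t * g t) (u t) t) (hcont : ContinuousAt g 0)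
    (hdecay : Tendsto (fun t => t * g t * log t - f t) atTop (nhds 0)) {A : ℝ} (hA : 0 ≤ A)
    (hint : IntegrableOn (fun t => u t * log (max t A)) (Set.Ioi 0)) :
    ∫ t in Set.Ioi 0, u t * log (max t A) = f A := by
  have hinner : ∫ t in Set.Ioc 0 A, u t * log (max t A) = A * g A * log A := by
    have hconst : ∀ t ∈ Set.Ioc 0 A, u t * log (max t A) = u t * log A := fun t ht => by
      rw [max_eq_right ht.2]
    rw [setIntegral_congr_fun measurableSet_Ioc hconst, ← intervalIntegral.integral_of_le hA,
      intervalIntegral.integral_eq_sub_of_hasDerivAt (f := fun t => t * g t * log A)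
        (fun t ht => (hg t (Set.uIcc_of_le hA ▸ ht).1).mul_const _)]
    · simp
    · rw [intervalIntegrable_iff_integrableOn_Ioc_of_le hA]
      exact (hint.mono_set Set.Ioc_subset_Ioi_self).congr_fun hconst measurableSet_Ioc
  have houter : ∫ t in Set.Ioi A, u t * log (max t A) = f A - A * g A * log A := by
    have hlog : ∀ t ∈ Set.Ioi A, u t * log (max t A) = u t * log t := fun t ht => by
      rw [max_eq_left (Set.mem_Ioi.1 ht).le]
    have hderiv : ∀ t ∈ Set.Ioi A,
        HasDerivAt (fun t => t * g t * log t - f t) (u t * log t) t := fun t ht => by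
      have ht0 : 0 < t := hA.trans_lt ht
      refine (((hg t ht0.le).fun_mul (hasDerivAt_log ht0.ne')).fun_sub (hf t ht0.le)).congr_deriv ?_
      field_simp
      ring
    have hcont_mul_log : ContinuousAt (fun t => t * g t * log t) A := by
      rcases hA.eq_or_lt with rfl | hA
      · refine (hcont.mul continuous_mul_log.continuousAt).congr (.of_forall fun t => ?_)
        simp only [Pi.mul_apply]
        ring
      · exact (hg A hA.le).continuousAt.mul (continuousAt_log hA.ne')
    rw [setIntegral_congr_fun measurableSet_Ioi hlog, integral_Ioi_of_hasDerivAt_of_tendsto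
      (hcont_mul_log.fun_sub (hf A hA).continuousAt).continuousWithinAt hderiv
      ((hint.mono_set (Set.Ioi_subset_Ioi hA)).congr_fun hlog measurableSet_Ioi) hdecay]
    ring
  rw [← Set.Ioc_union_Ioi_eq_Ioi hA, setIntegral_union (Set.Ioc_disjoint_Ioi le_rfl)
    measurableSet_Ioi (hint.mono_set Set.Ioc_subset_Ioi_self)
    (hint.mono_set (Set.Ioi_subset_Ioi hA)), hinner, houter]
  ring

lemma integral_comp_norm_sq_mul_log_norm_sub_eq {f g u : ℝ → ℝ}
    (hf : ∀ t, 0 ≤ t → HasDerivAt f (g t) t)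
    (hg : ∀ t, 0 ≤ t → HasDerivAt (fun t => t * g t) (u t) t) (hcont : ContinuousAt g 0)
    (hdecay : Tendsto (fun t => t * g t * log t - f t) atTop (nhds 0)) (a : ℂ)
    (hint : Integrable fun z : ℂ => u (‖z‖ ^ 2) * log ‖z - a‖) :
    ∫ z : ℂ, u (‖z‖ ^ 2) * log ‖z - a‖ = π / 2 * f (‖a‖ ^ 2) := by
  rw [integral_comp_norm_sq_mul_log_norm_sub hint, integral_mul_log_max hf hg hcont hdecay
    (sq_nonneg _) (integrableOn_mul_log_max hint)]

/-- The weight `V(z) = log (1 + |z|²)`. -/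
noncomputable def logWeight {E : Type*} [Norm E] (z : E) : ℝ := log (1 + ‖z‖ ^ 2)

lemma logWeight_nonneg {E : Type*} [Norm E] (z : E) : 0 ≤ logWeight z :=
  log_nonneg (le_add_of_nonneg_right (sq_nonneg _))

section SphericalMeasure

/-- The density of the uniform probability measure on the sphere, transported to the plane by
stereographic projection and dilated by `√s`; for `s = 1` it is the density of `μ_V`. -/
noncomputable def sphericalDensity (s : ℝ) (z : ℂ) : ℝ := s / (π * (s + ‖z‖ ^ 2) ^ 2)

/-- The measure with density `sphericalDensity s`. -/
noncomputable def sphericalMeasure (s : ℝ) : Measure ℂ :=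
  volume.withDensity fun z => ENNReal.ofReal (sphericalDensity s z)

variable {s : ℝ}

lemma sphericalDensity_pos (hs : 0 < s) (z : ℂ) : 0 < sphericalDensity s z := by
  unfold sphericalDensity
  positivity

lemma sphericalDensity_le (hs : 0 < s) (z : ℂ) : sphericalDensity s z ≤ (π * s)⁻¹ :=
  calc s / (π * (s + ‖z‖ ^ 2) ^ 2) ≤ s / (π * s ^ 2) := by
        gcongr
        exact le_add_of_nonneg_right (sq_nonneg _)
    _ = (π * s)⁻¹ := by field_simp

lemma continuous_sphericalDensity (hs : 0 < s) : Continuous (sphericalDensity s) :=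
  Continuous.div (by fun_prop) (by fun_prop) fun z => by positivity

lemma integrable_sphericalMeasure_iff (hs : 0 < s) {F : ℂ → ℝ} :
    Integrable F (sphericalMeasure s) ↔ Integrable fun z => sphericalDensity s z * F z := by
  rw [sphericalMeasure, integrable_withDensity_iff_integrable_smul'
    (continuous_sphericalDensity hs).measurable.ennreal_ofReal (by simp)]
  simp [ENNReal.toReal_ofReal (sphericalDensity_pos hs _).le]

lemma integral_sphericalMeasure {E : Type*} [NormedAddCommGroup E] [NormedSpace ℝ E]
    (hs : 0 < s) (F : ℂ → E) :
    ∫ z, F z ∂sphericalMeasure s = ∫ z, sphericalDensity s z • F z := by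
  rw [sphericalMeasure, integral_withDensity_eq_integral_toReal_smul
    (continuous_sphericalDensity hs).measurable.ennreal_ofReal (by simp)]
  simp [ENNReal.toReal_ofReal (sphericalDensity_pos hs _).le]

lemma hasDerivAt_div_add (s : ℝ) {t : ℝ} (ht : s + t ≠ 0) :
    HasDerivAt (fun t => t / (s + t)) (s / (s + t) ^ 2) t := by
  refine ((hasDerivAt_id t).fun_div ((hasDerivAt_id t).const_add s) ht).congr_deriv ?_
  simp

lemma tendsto_div_add_atTop (s : ℝ) : Tendsto (fun t => t / (s + t)) atTop (nhds 1) := by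
  have hinv : Tendsto (fun t => 1 - s * (s + t)⁻¹) atTop (nhds (1 - s * 0)) :=
    ((tendsto_inv_atTop_zero.comp (tendsto_atTop_add_const_left _ s tendsto_id)).const_mul
      s).const_sub 1
  rw [mul_zero, sub_zero] at hinv
  refine hinv.congr' ?_
  filter_upwards [eventually_gt_atTop (-s)] with t ht
  have : s + t ≠ 0 := by linarith
  field_simp
  ring

lemma integrable_sphericalDensity (hs : 0 < s) : Integrable (sphericalDensity s) := by
  refine (integrable_comp_norm_sq_of_hasDerivAt_of_nonneg
    (fun t ht => hasDerivAt_div_add s (by positivity)) (fun t _ => by positivity)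
    (tendsto_div_add_atTop s)).const_mul π⁻¹ |>.congr (.of_forall fun z => ?_)
  simp only [sphericalDensity]
  field_simp

lemma integral_sphericalDensity (hs : 0 < s) : ∫ z, sphericalDensity s z = 1 := by
  have hdensity (z : ℂ) : s / (s + ‖z‖ ^ 2) ^ 2 = π * sphericalDensity s z := by
    simp only [sphericalDensity]
    field_simp
  have := integral_comp_norm_sq_of_hasDerivAt
    (fun t ht => hasDerivAt_div_add s (t := t) (by positivity))
    (by simpa only [hdensity] using (integrable_sphericalDensity hs).const_mul π)
    (tendsto_div_add_atTop s)
  simpa [hdensity, integral_const_mul, pi_ne_zero] using this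

lemma isProbabilityMeasure_sphericalMeasure (hs : 0 < s) :
    IsProbabilityMeasure (sphericalMeasure s) := by
  constructor
  rw [sphericalMeasure, withDensity_apply _ .univ, Measure.restrict_univ,
    ← ofReal_integral_eq_lintegral_ofReal (integrable_sphericalDensity hs)
      (.of_forall fun z => (sphericalDensity_pos hs z).le), integral_sphericalDensity hs]
  simp

instance : IsProbabilityMeasure (sphericalMeasure 1) :=
  isProbabilityMeasure_sphericalMeasure one_pos

lemma hasDerivAt_neg_one_add_log_div {t : ℝ} (ht : 0 ≤ t) :
    HasDerivAt (fun t => -((1 + log (1 + t)) / (1 + t))) (log (1 + t) / (1 + t) ^ 2) t := by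
  have hadd : HasDerivAt (fun t : ℝ => 1 + t) 1 t := (hasDerivAt_id t).const_add 1
  refine (((hadd.log (by positivity)).const_add 1).fun_div hadd (by positivity)).fun_neg.congr_deriv
    ?_
  field_simp
  ring

lemma tendsto_neg_one_add_log_div :
    Tendsto (fun t => -((1 + log (1 + t)) / (1 + t))) atTop (nhds 0) := by
  have hadd : Tendsto (fun t : ℝ => 1 + t) atTop atTop :=
    tendsto_atTop_add_const_left _ 1 tendsto_id
  have hlog := (isLittleO_log_id_atTop.tendsto_div_nhds_zero.comp hadd).add
    (tendsto_inv_atTop_zero.comp hadd)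
  rw [add_zero] at hlog
  rw [← neg_zero]
  refine hlog.neg.congr fun t => ?_
  simp only [Function.comp_apply, id]
  ring

lemma integrable_logWeight : Integrable logWeight (sphericalMeasure 1) := by
  refine (integrable_sphericalMeasure_iff one_pos).2 <|
    (integrable_comp_norm_sq_of_hasDerivAt_of_nonneg (fun t => hasDerivAt_neg_one_add_log_div)
      (fun t ht => div_nonneg (log_nonneg (by linarith)) (by positivity))
      tendsto_neg_one_add_log_div).const_mul π⁻¹ |>.congr (.of_forall fun z => ?_)
  simp only [sphericalDensity, logWeight]
  field_simp

lemma integral_logWeight : ∫ z, logWeight z ∂sphericalMeasure 1 = 1 := by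
  have hdensity (z : ℂ) :
      log (1 + ‖z‖ ^ 2) / (1 + ‖z‖ ^ 2) ^ 2 = π * (sphericalDensity 1 z * logWeight z) := by
    simp only [sphericalDensity, logWeight]
    field_simp
  have := integral_comp_norm_sq_of_hasDerivAt (fun t => hasDerivAt_neg_one_add_log_div)
    (by simpa only [hdensity] using
      ((integrable_sphericalMeasure_iff one_pos).1 integrable_logWeight).const_mul π)
    tendsto_neg_one_add_log_div
  simpa [hdensity, integral_const_mul, pi_ne_zero, integral_sphericalMeasure one_pos] using this

end SphericalMeasure

section LogKernel

open scoped Real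

lemma integrable_posLog_inv_norm : Integrable fun z : ℂ => log⁺ ‖z‖⁻¹ := by
  have hzero : ∀ r ∈ Set.Ioi (0 : ℝ), r ∉ Set.Ioc (0 : ℝ) 1 → r * log⁺ r⁻¹ = 0 := fun r hr hr1 => by
    have : 1 < r := by simpa [Set.mem_Ioi.1 hr] using hr1
    have hinv : |r⁻¹| ≤ 1 := by
      rw [abs_inv, abs_of_pos hr]
      exact inv_le_one_of_one_le₀ this.le
    rw [(posLog_eq_zero_iff _).2 hinv, mul_zero]
  rw [integrable_fun_norm_addHaar volume (f := fun r => log⁺ r⁻¹), Complex.finrank_real_complex]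
  simp only [Nat.add_one_sub_one, pow_one, smul_eq_mul]
  refine IntegrableOn.of_forall_sdiff_eq_zero ?_ measurableSet_Ioi
    (s := Set.Ioc 0 1) fun r hr => hzero r hr.1 hr.2
  refine (continuous_mul_log.neg.integrableOn_Icc.mono_set Set.Ioc_subset_Icc_self).congr_fun
    (fun r hr => ?_) measurableSet_Ioc
  rw [posLog_eq_log (by rw [abs_inv, abs_of_pos hr.1]; exact (one_le_inv₀ hr.1).2 hr.2),
    log_inv, mul_neg]
  rfl

lemma posLog_norm_sub_le {E : Type*} [SeminormedAddCommGroup E] (z a : E) :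
    log⁺ ‖z - a‖ ≤ (logWeight z + logWeight a) / 2 := by
  have hnorm : ‖z - a‖ ^ 2 ≤ (1 + ‖z‖ ^ 2) * (1 + ‖a‖ ^ 2) :=
    calc ‖z - a‖ ^ 2 ≤ (‖z‖ + ‖a‖) ^ 2 := by gcongr; exact norm_sub_le z a
      _ ≤ (1 + ‖z‖ ^ 2) * (1 + ‖a‖ ^ 2) := by nlinarith [sq_nonneg (‖z‖ * ‖a‖ - 1)]
  have hweight (w : E) : log⁺ (1 + ‖w‖ ^ 2) = logWeight w :=
    posLog_eq_log (by rw [abs_of_pos (by positivity)]; linarith [sq_nonneg ‖w‖])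
  have := (posLog_le_posLog (sq_nonneg _) hnorm).trans posLog_mul
  rw [posLog_pow, hweight, hweight] at this
  push_cast at this
  linarith

lemma abs_log_eq_two_mul_posLog_sub_log (x : ℝ) : |log x| = 2 * log⁺ x - log x := by
  linarith [half_mul_log_add_log_abs (x := x)]

lemma integrable_log_norm_sub (a : ℂ) :
    Integrable (fun z => log ‖z - a‖) (sphericalMeasure 1) := by
  have hinv : Integrable (fun z : ℂ => log⁺ ‖z - a‖⁻¹) (sphericalMeasure 1) := by
    refine (integrable_sphericalMeasure_iff one_pos).2 <|
      (integrable_posLog_inv_norm.comp_sub_right a).bdd_mul (c := (π * 1)⁻¹)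
        (continuous_sphericalDensity one_pos).aestronglyMeasurable (.of_forall fun z => ?_)
    rw [norm_of_nonneg (sphericalDensity_pos one_pos z).le]
    exact sphericalDensity_le one_pos z
  refine ((integrable_logWeight.add (integrable_const (logWeight a))).div_const 2 |>.add
    hinv).mono' (Measurable.aestronglyMeasurable (by fun_prop)) (.of_forall fun z => ?_)
  have hupper := posLog_norm_sub_le z a
  have hsplit := posLog_sub_posLog_inv (x := ‖z - a‖)
  have habs := abs_log_eq_two_mul_posLog_sub_log ‖z - a‖
  rw [norm_eq_abs]
  simp only [Pi.add_apply]
  linarith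

lemma tendsto_log_div_add_atTop {s : ℝ} (hs : 0 ≤ s) :
    Tendsto (fun t => log t / (s + t)) atTop (nhds 0) := by
  refine squeeze_zero' ?_ ?_ isLittleO_log_id_atTop.tendsto_div_nhds_zero
  · filter_upwards [eventually_ge_atTop 1] with t ht
    exact div_nonneg (log_nonneg ht) (by positivity)
  · filter_upwards [eventually_ge_atTop 1] with t ht
    exact div_le_div_of_nonneg_left (log_nonneg ht) (by positivity) (le_add_of_nonneg_left hs)

lemma tendsto_div_add_mul_log_sub_log :
    Tendsto (fun t => t * (1 / (1 + t)) * log t - log (1 + t)) atTop (nhds 0) := by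
  have hsum := (tendsto_log_div_add_atTop one_pos.le).neg.add
    ((tendsto_div_add_atTop 1).log one_ne_zero)
  rw [log_one, neg_zero, add_zero] at hsum
  refine hsum.congr' ?_
  filter_upwards [eventually_gt_atTop 0] with t ht
  rw [log_div ht.ne' (by positivity)]
  field_simp
  ring

lemma integral_log_norm_sub (a : ℂ) :
    ∫ z, log ‖z - a‖ ∂sphericalMeasure 1 = logWeight a / 2 := by
  have hdensity (z : ℂ) :
      1 / (1 + ‖z‖ ^ 2) ^ 2 * log ‖z - a‖ = π * (sphericalDensity 1 z * log ‖z - a‖) := by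
    simp only [sphericalDensity]
    field_simp
  have := integral_comp_norm_sq_mul_log_norm_sub_eq (f := fun t => log (1 + t))
    (g := fun t => 1 / (1 + t)) (u := fun t => 1 / (1 + t) ^ 2) (a := a)
    (fun t ht => ((hasDerivAt_id t).const_add 1).log (by positivity))
    (fun t ht => by simpa [div_eq_mul_inv] using hasDerivAt_div_add 1 (t := t) (by positivity))
    (ContinuousAt.div (by fun_prop) (by fun_prop) (by norm_num)) tendsto_div_add_mul_log_sub_log
    (by simpa only [hdensity] using
      ((integrable_sphericalMeasure_iff one_pos).1 (integrable_log_norm_sub a)).const_mul π)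
  simp only [hdensity, integral_const_mul] at this
  rw [integral_sphericalMeasure one_pos]
  simp only [smul_eq_mul, logWeight]
  exact mul_left_cancel₀ pi_ne_zero (this.trans (by ring))

lemma integrable_posLog_norm_sub (a : ℂ) :
    Integrable (fun z => log⁺ ‖z - a‖) (sphericalMeasure 1) := by
  refine (((integrable_log_norm_sub a).norm.add (integrable_log_norm_sub a)).div_const 2).congr
    (.of_forall fun z => ?_)
  have := abs_log_eq_two_mul_posLog_sub_log ‖z - a‖
  simp only [Pi.add_apply, norm_eq_abs]
  linarith

lemma integral_abs_log_norm_sub_le (a : ℂ) :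
    ∫ z, |log ‖z - a‖| ∂sphericalMeasure 1 ≤ 1 + logWeight a / 2 := by
  have hupper : ∫ z, log⁺ ‖z - a‖ ∂sphericalMeasure 1 ≤ (1 + logWeight a) / 2 := by
    calc ∫ z, log⁺ ‖z - a‖ ∂sphericalMeasure 1
        ≤ ∫ z, (logWeight z + logWeight a) / 2 ∂sphericalMeasure 1 :=
          integral_mono (integrable_posLog_norm_sub a)
            ((integrable_logWeight.add (integrable_const _)).div_const 2)
            fun z => posLog_norm_sub_le z a
      _ = (1 + logWeight a) / 2 := by
          rw [integral_div, integral_add integrable_logWeight (integrable_const _),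
            integral_logWeight]
          simp
  simp only [abs_log_eq_two_mul_posLog_sub_log]
  rw [integral_sub ((integrable_posLog_norm_sub a).const_mul 2) (integrable_log_norm_sub a),
    integral_const_mul, integral_log_norm_sub]
  linarith

end LogKernel

section SphericalLaplacian

/-- The normalized Laplacian `(2π)⁻¹ Δ (sphericalDensity s)`. -/
noncomputable def sphericalLaplacian (s : ℝ) (z : ℂ) : ℝ :=
  4 * s / π ^ 2 * ((2 * ‖z‖ ^ 2 - s) / (s + ‖z‖ ^ 2) ^ 4)

variable {s : ℝ}

lemma continuous_sphericalLaplacian (hs : 0 < s) : Continuous (sphericalLaplacian s) :=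
  .mul continuous_const (.div (by fun_prop) (by fun_prop) fun z => by positivity)

lemma abs_sphericalLaplacian_le (hs : 0 < s) (z : ℂ) :
    |sphericalLaplacian s z| ≤ 8 / (π * s) * sphericalDensity s z := by
  have hnum : |2 * ‖z‖ ^ 2 - s| ≤ 2 * (s + ‖z‖ ^ 2) :=
    abs_le.2 ⟨by linarith [sq_nonneg ‖z‖], by linarith⟩
  have hden : s ≤ s + ‖z‖ ^ 2 := le_add_of_nonneg_right (sq_nonneg _)
  calc |sphericalLaplacian s z|
      = 4 * s / π ^ 2 * (|2 * ‖z‖ ^ 2 - s| / (s + ‖z‖ ^ 2) ^ 4) := by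
        rw [sphericalLaplacian, abs_mul, abs_div _ ((s + ‖z‖ ^ 2) ^ 4),
          abs_of_pos (a := 4 * s / π ^ 2) (by positivity),
          abs_of_pos (a := (s + ‖z‖ ^ 2) ^ 4) (by positivity)]
    _ ≤ 4 * s / π ^ 2 * (2 * (s + ‖z‖ ^ 2) / (s * (s + ‖z‖ ^ 2) ^ 3)) := by
        rw [pow_succ' (s + ‖z‖ ^ 2)]
        gcongr
    _ = 8 / (π * s) * sphericalDensity s z := by
        simp only [sphericalDensity]
        field_simp
        ring

lemma exists_sphericalDensity_sub_le (hs : 0 < s) (b : ℂ) :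
    ∃ C, ∀ z, sphericalDensity s (z - b) ≤ C * sphericalDensity 1 z := by
  refine ⟨s * (2 + (1 + 2 * ‖b‖ ^ 2) / s) ^ 2, fun z => ?_⟩
  have hnorm : 1 + ‖z‖ ^ 2 ≤ (2 + (1 + 2 * ‖b‖ ^ 2) / s) * (s + ‖z - b‖ ^ 2) :=
    calc 1 + ‖z‖ ^ 2 ≤ 1 + (‖z - b‖ + ‖b‖) ^ 2 := by
          gcongr
          simpa using norm_add_le (z - b) b
      _ ≤ 2 * ‖z - b‖ ^ 2 + (1 + 2 * ‖b‖ ^ 2) := by nlinarith [sq_nonneg (‖z - b‖ - ‖b‖)]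
      _ ≤ (2 + (1 + 2 * ‖b‖ ^ 2) / s) * (s + ‖z - b‖ ^ 2) := by
          have : 0 ≤ (1 + 2 * ‖b‖ ^ 2) / s * ‖z - b‖ ^ 2 := by positivity
          have : (1 + 2 * ‖b‖ ^ 2) / s * s = 1 + 2 * ‖b‖ ^ 2 := div_mul_cancel₀ _ hs.ne'
          linarith
  set K := 2 + (1 + 2 * ‖b‖ ^ 2) / s
  have hK : 0 < K := by positivity
  calc s / (π * (s + ‖z - b‖ ^ 2) ^ 2) = s * K ^ 2 / (π * (K * (s + ‖z - b‖ ^ 2)) ^ 2) := by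
        field_simp
    _ ≤ s * K ^ 2 / (π * (1 + ‖z‖ ^ 2) ^ 2) := by gcongr
    _ = s * K ^ 2 * sphericalDensity 1 z := by
        simp only [sphericalDensity]
        ring

lemma exists_abs_sphericalLaplacian_sub_le (hs : 0 < s) (b : ℂ) :
    ∃ C, ∀ z, |sphericalLaplacian s (z - b)| ≤ C * sphericalDensity 1 z := by
  obtain ⟨C, hC⟩ := exists_sphericalDensity_sub_le hs b
  refine ⟨8 / (π * s) * C, fun z => (abs_sphericalLaplacian_le hs _).trans ?_⟩
  rw [mul_assoc]
  gcongr
  exact hC z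

lemma integrable_mul_of_abs_le_sphericalDensity {φ F : ℂ → ℝ} {C : ℝ}
    (hφ : AEStronglyMeasurable φ) (hφC : ∀ z, |φ z| ≤ C * sphericalDensity 1 z)
    (hF : Integrable F (sphericalMeasure 1)) : Integrable fun z => φ z * F z := by
  have hdensity := (integrable_sphericalMeasure_iff one_pos).1 hF
  have hratio : AEStronglyMeasurable (fun z => φ z / sphericalDensity 1 z) :=
    hφ.div₀ (continuous_sphericalDensity one_pos).aestronglyMeasurable
  refine (hdensity.bdd_mul (c := C) hratio (.of_forall fun z => ?_)).congr (.of_forall fun z => ?_)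
  · rw [norm_eq_abs, abs_div, abs_of_pos (sphericalDensity_pos one_pos z),
      div_le_iff₀ (sphericalDensity_pos one_pos z)]
    exact hφC z
  · have := (sphericalDensity_pos one_pos z).ne'
    simp only
    field_simp

lemma integrable_sphericalLaplacian_sub_mul (hs : 0 < s) (b : ℂ) {F : ℂ → ℝ}
    (hF : Integrable F (sphericalMeasure 1)) :
    Integrable fun z => sphericalLaplacian s (z - b) * F z := by
  obtain ⟨C, hC⟩ := exists_abs_sphericalLaplacian_sub_le hs b
  exact integrable_mul_of_abs_le_sphericalDensity
    ((continuous_sphericalLaplacian hs).comp (continuous_sub_right b)).aestronglyMeasurable hC hF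

lemma hasDerivAt_mul_neg_div_add_pow_three (hs : 0 < s) {t : ℝ} (ht : 0 ≤ t) :
    HasDerivAt (fun t => t * (-2 * s / (π * (s + t) ^ 3)))
      (2 * s / π * ((2 * t - s) / (s + t) ^ 4)) t := by
  have hadd : HasDerivAt (fun t => s + t) 1 t := (hasDerivAt_id t).const_add s
  refine ((hasDerivAt_id t).fun_mul ((hasDerivAt_const t (-2 * s)).fun_div
    ((hadd.fun_pow 3).const_mul π) (by positivity))).congr_deriv ?_
  simp only [id_eq, zero_mul, Nat.cast_ofNat, Nat.add_one_sub_one, mul_one, one_mul, zero_sub]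
  field_simp
  ring

lemma tendsto_mul_neg_div_add_pow_three (hs : 0 < s) :
    Tendsto (fun t => t * (-2 * s / (π * (s + t) ^ 3))) atTop (nhds 0) := by
  have hinv : Tendsto (fun t => (s + t)⁻¹) atTop (nhds 0) :=
    tendsto_inv_atTop_zero.comp (tendsto_atTop_add_const_left _ s tendsto_id)
  have hprod := (((tendsto_div_add_atTop s).mul hinv).mul hinv).const_mul (-2 * s / π)
  rw [mul_zero, mul_zero] at hprod
  refine hprod.congr' ?_
  filter_upwards [eventually_gt_atTop 0] with t ht
  field_simp

lemma integral_sphericalLaplacian (hs : 0 < s) : ∫ z, sphericalLaplacian s z = 0 := by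
  have hlaplacian (z : ℂ) : 2 * s / π * ((2 * ‖z‖ ^ 2 - s) / (s + ‖z‖ ^ 2) ^ 4)
      = π / 2 * sphericalLaplacian s z := by
    simp only [sphericalLaplacian]
    field_simp
    ring
  have hint : Integrable (sphericalLaplacian s) :=
    ((integrable_sphericalDensity hs).const_mul _).mono'
      (continuous_sphericalLaplacian hs).aestronglyMeasurable
      (.of_forall fun z => abs_sphericalLaplacian_le hs z)
  have := integral_comp_norm_sq_of_hasDerivAt (fun t => hasDerivAt_mul_neg_div_add_pow_three hs)
    (by simpa only [hlaplacian] using hint.const_mul (π / 2))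
    (tendsto_mul_neg_div_add_pow_three hs)
  simpa [hlaplacian, integral_const_mul, pi_ne_zero] using this

lemma tendsto_mul_neg_div_add_pow_three_mul_log_sub (hs : 0 < s) :
    Tendsto (fun t => t * (-2 * s / (π * (s + t) ^ 3)) * log t - s / (π * (s + t) ^ 2))
      atTop (nhds 0) := by
  have hinv : Tendsto (fun t => (s + t)⁻¹) atTop (nhds 0) :=
    tendsto_inv_atTop_zero.comp (tendsto_atTop_add_const_left _ s tendsto_id)
  have hlog := (((tendsto_div_add_atTop s).mul (tendsto_log_div_add_atTop hs.le)).mul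
    hinv).const_mul (-2 * s / π)
  have hsub := hlog.sub ((hinv.mul hinv).const_mul (s / π))
  simp only [mul_zero, sub_zero] at hsub
  refine hsub.congr' ?_
  filter_upwards [eventually_gt_atTop 0] with t ht
  field_simp

lemma hasDerivAt_div_add_sq (hs : 0 < s) {t : ℝ} (ht : 0 ≤ t) :
    HasDerivAt (fun t => s / (π * (s + t) ^ 2)) (-2 * s / (π * (s + t) ^ 3)) t := by
  have hadd : HasDerivAt (fun t => s + t) 1 t := (hasDerivAt_id t).const_add s
  refine ((hasDerivAt_const t s).fun_div ((hadd.fun_pow 2).const_mul π)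
    (by positivity)).congr_deriv ?_
  simp only [zero_mul, Nat.cast_ofNat, Nat.add_one_sub_one, pow_one, mul_one, zero_sub, neg_mul]
  field_simp

/-- Convolving with `sphericalLaplacian s` inverts the logarithmic potential up to the mollifier
`sphericalDensity s`. -/
lemma integral_sphericalLaplacian_sub_mul_log_norm_sub (hs : 0 < s) (a b : ℂ) :
    ∫ z, sphericalLaplacian s (z - b) * log ‖z - a‖ = sphericalDensity s (a - b) := by
  have hlaplacian (z : ℂ) :
      2 * s / π * ((2 * ‖z‖ ^ 2 - s) / (s + ‖z‖ ^ 2) ^ 4) * log ‖z - (a - b)‖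
        = π / 2 * (sphericalLaplacian s z * log ‖z - (a - b)‖) := by
    simp only [sphericalLaplacian]
    field_simp
    ring
  have hint : Integrable fun z => sphericalLaplacian s z * log ‖z - (a - b)‖ := by
    simpa using integrable_sphericalLaplacian_sub_mul hs 0 (integrable_log_norm_sub (a - b))
  have hgreen := integral_comp_norm_sq_mul_log_norm_sub_eq (a := a - b)
    (fun t => hasDerivAt_div_add_sq hs) (fun t => hasDerivAt_mul_neg_div_add_pow_three hs)
    (ContinuousAt.div (by fun_prop) (by fun_prop) (by positivity))
    (tendsto_mul_neg_div_add_pow_three_mul_log_sub hs)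
    (by simpa only [hlaplacian] using hint.const_mul (π / 2))
  simp only [hlaplacian, integral_const_mul] at hgreen
  calc ∫ z, sphericalLaplacian s (z - b) * log ‖z - a‖
      = ∫ z, sphericalLaplacian s z * log ‖z - (a - b)‖ := by
        rw [← integral_sub_right_eq_self (fun z => sphericalLaplacian s z * log ‖z - (a - b)‖) b]
        simp only [sub_sub_sub_cancel_right]
    _ = sphericalDensity s (a - b) := mul_left_cancel₀ (by positivity) hgreen

end SphericalLaplacian

section LogPotential

/-- The logarithmic potential of `μ`, with the sign for which it is subharmonic. -/
noncomputable def logPotential (μ : Measure ℂ) (z : ℂ) : ℝ := ∫ a, log ‖z - a‖ ∂μ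

lemma logPotential_sphericalMeasure_one (z : ℂ) :
    logPotential (sphericalMeasure 1) z = logWeight z / 2 := by
  simp only [logPotential, norm_sub_rev z, integral_log_norm_sub]

variable {μ : Measure ℂ} [IsFiniteMeasure μ] {φ : ℂ → ℝ} {C : ℝ}

lemma integrable_mul_log_norm_sub_prod (hφ : AEStronglyMeasurable φ)
    (hφC : ∀ z, |φ z| ≤ C * sphericalDensity 1 z) (hμ : Integrable logWeight μ) :
    Integrable (fun p : ℂ × ℂ => φ p.1 * log ‖p.1 - p.2‖) (volume.prod μ) := by
  have hmeas : AEStronglyMeasurable (fun p : ℂ × ℂ => φ p.1 * log ‖p.1 - p.2‖) (volume.prod μ) :=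
    hφ.comp_fst.mul (Measurable.aestronglyMeasurable (by fun_prop))
  refine (integrable_prod_iff' hmeas).2 ⟨.of_forall fun a =>
    integrable_mul_of_abs_le_sphericalDensity hφ hφC (integrable_log_norm_sub a), ?_⟩
  refine (((integrable_const (1 : ℝ)).add (hμ.div_const 2)).const_mul C).mono'
    hmeas.norm.prod_swap.integral_prod_right' (.of_forall fun a => ?_)
  have hC : 0 ≤ C := nonneg_of_mul_nonneg_left ((abs_nonneg _).trans (hφC 0))
    (sphericalDensity_pos one_pos 0)
  rw [norm_of_nonneg (integral_nonneg fun z => norm_nonneg _)]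
  calc ∫ z, ‖φ z * log ‖z - a‖‖
      ≤ ∫ z, C * (sphericalDensity 1 z * |log ‖z - a‖|) := by
        refine integral_mono
          (integrable_mul_of_abs_le_sphericalDensity hφ hφC (integrable_log_norm_sub a)).norm
          (((integrable_sphericalMeasure_iff one_pos).1 (integrable_log_norm_sub a).norm).const_mul
            C) fun z => ?_
        simp only [norm_mul, norm_eq_abs, ← mul_assoc]
        gcongr
        exact hφC z
    _ = C * ∫ z, |log ‖z - a‖| ∂sphericalMeasure 1 := by
        simp [integral_const_mul, integral_sphericalMeasure one_pos]
    _ ≤ C * (1 + logWeight a / 2) := by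
        gcongr
        exact integral_abs_log_norm_sub_le a

lemma integral_mul_logPotential (hφ : AEStronglyMeasurable φ)
    (hφC : ∀ z, |φ z| ≤ C * sphericalDensity 1 z) (hμ : Integrable logWeight μ) :
    ∫ z, φ z * logPotential μ z = ∫ a, (∫ z, φ z * log ‖z - a‖) ∂μ := by
  simp only [logPotential, ← integral_const_mul]
  exact integral_integral_swap (integrable_mul_log_norm_sub_prod hφ hφC hμ)

lemma integrable_logPotential (hμ : Integrable logWeight μ) :
    Integrable (logPotential μ) (sphericalMeasure 1) := by
  have := (integrable_mul_log_norm_sub_prod (C := 1)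
    (continuous_sphericalDensity one_pos).aestronglyMeasurable
    (fun z => by rw [abs_of_pos (sphericalDensity_pos one_pos z), one_mul]) hμ).integral_prod_left
  refine (integrable_sphericalMeasure_iff one_pos).2 ?_
  simpa only [logPotential, integral_const_mul] using this

lemma integral_logPotential (hμ : Integrable logWeight μ) :
    ∫ z, logPotential μ z ∂sphericalMeasure 1 = (∫ a, logWeight a ∂μ) / 2 := by
  have := integral_mul_logPotential (C := 1)
    (continuous_sphericalDensity one_pos).aestronglyMeasurable
    (fun z => by rw [abs_of_pos (sphericalDensity_pos one_pos z), one_mul]) hμ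
  simpa only [← smul_eq_mul, ← integral_sphericalMeasure one_pos, integral_log_norm_sub,
    integral_div] using this

lemma integral_sphericalLaplacian_sub_mul_logPotential {s : ℝ} (hs : 0 < s)
    (hμ : Integrable logWeight μ) (b : ℂ) :
    ∫ z, sphericalLaplacian s (z - b) * logPotential μ z = ∫ a, sphericalDensity s (a - b) ∂μ := by
  obtain ⟨C, hC⟩ := exists_abs_sphericalLaplacian_sub_le hs b
  have hmeas : AEStronglyMeasurable fun z => sphericalLaplacian s (z - b) :=
    ((continuous_sphericalLaplacian hs).comp (continuous_sub_right b)).aestronglyMeasurable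
  rw [integral_mul_logPotential hmeas hC hμ]
  simp only [integral_sphericalLaplacian_sub_mul_log_norm_sub hs]

end LogPotential

section Mollification

lemma tendsto_probabilityMeasure_of_tendsto_density {Ω : Type*} [TopologicalSpace Ω]
    [MeasurableSpace Ω] [OpensMeasurableSpace Ω] [HasOuterApproxClosed Ω] {ν : Measure Ω}
    {μ : ℕ → ProbabilityMeasure Ω} {μ₀ : ProbabilityMeasure Ω}
    {p : ℕ → Ω → ENNReal} {p₀ : Ω → ENNReal} (hp : ∀ n, Measurable (p n))
    (hμ : ∀ n, (μ n : Measure Ω) = ν.withDensity (p n))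
    (hμ₀ : (μ₀ : Measure Ω) = ν.withDensity p₀)
    (h : ∀ ω, Tendsto (fun n => p n ω) atTop (nhds (p₀ ω))) : Tendsto μ atTop (nhds μ₀) := by
  refine tendsto_of_forall_isOpen_le_liminf' fun U hU => ?_
  simp only [hμ, hμ₀, withDensity_apply _ hU.measurableSet]
  calc ∫⁻ ω in U, p₀ ω ∂ν = ∫⁻ ω in U, liminf (fun n => p n ω) atTop ∂ν := by
        simp only [(h _).liminf_eq]
    _ ≤ liminf (fun n => ∫⁻ ω in U, p n ω ∂ν) atTop := lintegral_liminf_le hp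

lemma conv_withDensity {G : Type*} [AddGroup G] [MeasurableSpace G] [MeasurableAdd₂ G]
    [MeasurableNeg G] (μ ν : Measure G) [SFinite μ] [SFinite ν] [ν.IsAddLeftInvariant]
    {p : G → ENNReal} (hp : Measurable p) :
    μ.conv (ν.withDensity p) = ν.withDensity fun b => ∫⁻ a, p (-a + b) ∂μ := by
  refine Measure.ext_of_lintegral _ fun φ hφ => ?_
  have hinner (a : G) : ∫⁻ z, φ (a + z) ∂ν.withDensity p = ∫⁻ b, p (-a + b) * φ b ∂ν := by
    rw [lintegral_withDensity_eq_lintegral_mul _ hp (by fun_prop),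
      ← lintegral_add_left_eq_self _ (-a)]
    simp
  rw [Measure.lintegral_conv hφ, lintegral_withDensity_eq_lintegral_mul _ (by fun_prop) hφ]
  simp only [hinner, Pi.mul_apply]
  rw [lintegral_lintegral_swap (by fun_prop)]
  exact lintegral_congr fun b => lintegral_mul_const _ (by fun_prop)

variable {s : ℝ}

lemma sphericalDensity_neg (s : ℝ) (z : ℂ) : sphericalDensity s (-z) = sphericalDensity s z := by
  simp [sphericalDensity]

lemma conv_sphericalMeasure (hs : 0 < s) (μ : Measure ℂ) [IsFiniteMeasure μ] :
    μ.conv (sphericalMeasure s) =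
      volume.withDensity fun b => ENNReal.ofReal (∫ a, sphericalDensity s (a - b) ∂μ) := by
  rw [sphericalMeasure, conv_withDensity _ _
    (continuous_sphericalDensity hs).measurable.ennreal_ofReal]
  refine congrArg _ (funext fun b => ?_)
  have hint : Integrable (fun a => sphericalDensity s (a - b)) μ :=
    Integrable.of_bound
      ((continuous_sphericalDensity hs).comp (continuous_sub_right b)).aestronglyMeasurable
      (π * s)⁻¹ (.of_forall fun a => by
        rw [norm_of_nonneg (sphericalDensity_pos hs _).le]; exact sphericalDensity_le hs _)
  rw [ofReal_integral_eq_lintegral_ofReal hint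
    (.of_forall fun a => (sphericalDensity_pos hs _).le)]
  simp only [← sphericalDensity_neg s (_ - b), neg_sub, neg_add_eq_sub]

lemma charFun_sphericalMeasure (hs : 0 < s) (ξ : ℂ) :
    charFun (sphericalMeasure s) ξ = charFun (sphericalMeasure 1) (√s • ξ) := by
  have hdensity (z : ℂ) : sphericalDensity s (√s • z) = s⁻¹ * sphericalDensity 1 z := by
    simp only [sphericalDensity, norm_smul, mul_pow, norm_eq_abs, sq_abs, sq_sqrt hs.le]
    field_simp
  have hscale := Measure.integral_comp_smul (volume : Measure ℂ)
    (fun z => sphericalDensity s z • Complex.exp (inner ℝ z ξ * Complex.I)) (√s)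
  simp only [hdensity, Complex.finrank_real_complex, sq_sqrt hs.le, abs_inv, abs_of_pos hs,
    mul_smul, integral_smul, inner_smul_left] at hscale
  simp only [charFun_apply, integral_sphericalMeasure hs, integral_sphericalMeasure one_pos,
    inner_smul_right]
  exact (smul_right_injective _ (inv_ne_zero hs.ne') hscale).symm

lemma exists_charFun_sphericalMeasure_ne_zero (ξ : ℂ) :
    ∃ s, 0 < s ∧ charFun (sphericalMeasure s) ξ ≠ 0 := by
  have hcont : Continuous fun s : ℝ => charFun (sphericalMeasure 1) (√s • ξ) :=
    continuous_charFun.comp (by fun_prop)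
  have hne : charFun (sphericalMeasure 1) (√0 • ξ) ≠ 0 := by simp [charFun_zero]
  obtain ⟨s, hs, hs0⟩ := ((hcont.continuousAt.eventually_ne hne).filter_mono
    nhdsWithin_le_nhds |>.and (self_mem_nhdsWithin (s := Set.Ioi 0))).exists
  exact ⟨s, hs0, by rwa [charFun_sphericalMeasure hs0]⟩

lemma tendsto_of_tendsto_integral_sphericalDensity {μ : ℕ → ProbabilityMeasure ℂ}
    {μ₀ : ProbabilityMeasure ℂ}
    (h : ∀ s, 0 < s → ∀ b, Tendsto (fun n => ∫ a, sphericalDensity s (a - b) ∂μ n) atTop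
      (nhds (∫ a, sphericalDensity s (a - b) ∂μ₀))) : Tendsto μ atTop (nhds μ₀) := by
  refine ProbabilityMeasure.tendsto_iff_tendsto_charFun.2 fun ξ => ?_
  obtain ⟨s, hs, hξ⟩ := exists_charFun_sphericalMeasure_ne_zero ξ
  have := isProbabilityMeasure_sphericalMeasure hs
  have hmeas {ν : ProbabilityMeasure ℂ} : Measurable fun b => ∫ a, sphericalDensity s (a - b) ∂ν :=
    ((continuous_sphericalDensity hs).comp (f := fun p : ℂ × ℂ => p.2 - p.1)
      (by fun_prop)).stronglyMeasurable.integral_prod_right'.measurable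
  let mollify (ν : ProbabilityMeasure ℂ) : ProbabilityMeasure ℂ :=
    ⟨(ν : Measure ℂ).conv (sphericalMeasure s), inferInstance⟩
  have hmollify : Tendsto (fun n => mollify (μ n)) atTop (nhds (mollify μ₀)) :=
    tendsto_probabilityMeasure_of_tendsto_density (fun n => hmeas.ennreal_ofReal)
      (fun n => conv_sphericalMeasure hs _) (conv_sphericalMeasure hs _)
      fun b => ENNReal.tendsto_ofReal (h s hs b)
  have hcharFun := ProbabilityMeasure.tendsto_iff_tendsto_charFun.1 hmollify ξ
  simp only [mollify, ProbabilityMeasure.coe_mk, charFun_conv] at hcharFun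
  simpa [hξ] using hcharFun.div_const (charFun (sphericalMeasure s) ξ)

lemma integral_sphericalDensity_sub_sub_eq (hs : 0 < s) {μ ν : Measure ℂ} [IsFiniteMeasure μ]
    [IsFiniteMeasure ν] (hμ : Integrable logWeight μ) (hν : Integrable logWeight ν) (κ : ℝ)
    (b : ℂ) :
    ∫ a, sphericalDensity s (a - b) ∂μ - ∫ a, sphericalDensity s (a - b) ∂ν =
      ∫ z, sphericalLaplacian s (z - b) * (logPotential μ z - logPotential ν z - κ) := by
  have hconst : ∫ z, sphericalLaplacian s (z - b) * κ = 0 := by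
    rw [integral_mul_const, integral_sub_right_eq_self, integral_sphericalLaplacian hs, zero_mul]
  have hint {F : ℂ → ℝ} := integrable_sphericalLaplacian_sub_mul hs b (F := F)
  have hintμ := hint (integrable_logPotential hμ)
  have hintν := hint (integrable_logPotential hν)
  have hdiff : Integrable fun z => sphericalLaplacian s (z - b) * logPotential μ z -
      sphericalLaplacian s (z - b) * logPotential ν z := hintμ.sub hintν
  simp only [mul_sub]
  rw [integral_sub hdiff (hint (integrable_const κ)), integral_sub hintμ hintν, hconst,
    integral_sphericalLaplacian_sub_mul_logPotential hs hμ,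
    integral_sphericalLaplacian_sub_mul_logPotential hs hν, sub_zero]

lemma abs_integral_mul_le_of_abs_le_sphericalDensity {φ F : ℂ → ℝ} {C : ℝ}
    (hφC : ∀ z, |φ z| ≤ C * sphericalDensity 1 z) (hF : Integrable F (sphericalMeasure 1)) :
    |∫ z, φ z * F z| ≤ C * ∫ z, |F z| ∂sphericalMeasure 1 := by
  rw [integral_sphericalMeasure one_pos fun z => |F z|, ← integral_const_mul,
    ← norm_eq_abs]
  refine norm_integral_le_of_norm_le
    (((integrable_sphericalMeasure_iff one_pos).1 hF.abs).const_mul C) (.of_forall fun z => ?_)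
  rw [norm_mul, smul_eq_mul, ← mul_assoc]
  exact mul_le_mul_of_nonneg_right (hφC z) (abs_nonneg _)

theorem tendsto_of_tendsto_integral_abs_logPotential_sub {μ : ℕ → ProbabilityMeasure ℂ}
    {μ₀ : ProbabilityMeasure ℂ} (hμ : ∀ n, Integrable logWeight (μ n : Measure ℂ))
    (hμ₀ : Integrable logWeight (μ₀ : Measure ℂ)) {κ : ℕ → ℝ}
    (h : Tendsto (fun n => ∫ z, |logPotential (μ n) z - logPotential μ₀ z - κ n|
      ∂sphericalMeasure 1) atTop (nhds 0)) : Tendsto μ atTop (nhds μ₀) := by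
  refine tendsto_of_tendsto_integral_sphericalDensity fun s hs b => ?_
  obtain ⟨C, hC⟩ := exists_abs_sphericalLaplacian_sub_le hs b
  rw [tendsto_iff_norm_sub_tendsto_zero]
  refine squeeze_zero (fun n => norm_nonneg _) (fun n => ?_) (by simpa using h.const_mul C)
  rw [integral_sphericalDensity_sub_sub_eq hs (hμ n) hμ₀ (κ n), norm_eq_abs]
  exact abs_integral_mul_le_of_abs_le_sphericalDensity hC
    (((integrable_logPotential (hμ n)).sub (integrable_logPotential hμ₀)).sub (integrable_const _))

end Mollification

section Energy

/-- The Hamiltonian `-∑_{i ≠ j} log ‖x i - x j‖ + β ∑ log (1 + ‖x i‖ ^ 2)` of a tuple of points; the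
diagonal terms vanish since `Real.log 0 = 0`. -/
noncomputable def weightedEnergy {ι E : Type*} [Fintype ι] [NormedAddCommGroup E] (β : ℝ)
    (x : ι → E) : ℝ :=
  -∑ i, ∑ j, log ‖x i - x j‖ + β * ∑ i, logWeight (x i)

lemma sum_sum_eq_sum_erase_add {ι : Type*} [Fintype ι] [DecidableEq ι] {g : ι → ι → ℝ}
    (hsymm : ∀ p q, g p q = g q p) (hdiag : ∀ p, g p p = 0) (i : ι) :
    ∑ p, ∑ q, g p q =
      ∑ p ∈ Finset.univ.erase i, ∑ q ∈ Finset.univ.erase i, g p q + 2 * ∑ q, g i q := by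
  have hcol : ∑ p ∈ Finset.univ.erase i, g p i = ∑ q, g i q := by
    rw [Finset.sum_erase (f := fun p => g p i) _ (hdiag i)]
    exact Finset.sum_congr rfl fun p _ => hsymm p i
  simp only [← Finset.add_sum_erase Finset.univ _ (Finset.mem_univ i), Finset.sum_add_distrib,
    hcol]
  ring

lemma injective_update_of_notMem_range {ι E : Type*} [DecidableEq ι] {x : ι → E} {y : E}
    (hx : Function.Injective x) (hy : y ∉ Set.range x) (i : ι) :
    Function.Injective (Function.update x i y) := by
  intro p q hpq
  simp only [Function.update_apply] at hpq
  split_ifs at hpq with hp hq hq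
  exacts [hp.trans hq.symm, (hy ⟨q, hpq.symm⟩).elim, (hy ⟨p, hpq⟩).elim, hx hpq]

variable {ι E : Type*} [Fintype ι] [NormedAddCommGroup E]

lemma weightedEnergy_update [DecidableEq ι] (β : ℝ) (x : ι → E) (i : ι) (y : E) :
    weightedEnergy β (Function.update x i y) = weightedEnergy β x
      - 2 * (∑ j ∈ Finset.univ.erase i, log ‖y - x j‖ - ∑ j, log ‖x i - x j‖)
      + β * (logWeight y - logWeight (x i)) := by
  have hsplit (z : ι → E) := sum_sum_eq_sum_erase_add (g := fun p q => log ‖z p - z q‖)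
    (fun p q => by rw [norm_sub_rev]) (fun p => by simp) i
  have hne {p : ι} (hp : p ∈ Finset.univ.erase i) : Function.update x i y p = x p :=
    Function.update_of_ne (Finset.ne_of_mem_erase hp) _ _
  have hpair : ∑ p ∈ Finset.univ.erase i, ∑ q ∈ Finset.univ.erase i,
      log ‖Function.update x i y p - Function.update x i y q‖ =
      ∑ p ∈ Finset.univ.erase i, ∑ q ∈ Finset.univ.erase i, log ‖x p - x q‖ :=
    Finset.sum_congr rfl fun p hp => Finset.sum_congr rfl fun q hq => by rw [hne hp, hne hq]
  have hrow : ∑ q, log ‖Function.update x i y i - Function.update x i y q‖ =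
      ∑ j ∈ Finset.univ.erase i, log ‖y - x j‖ := by
    rw [← Finset.add_sum_erase _ _ (Finset.mem_univ i), sub_self, norm_zero, log_zero, zero_add]
    exact Finset.sum_congr rfl fun q hq => by rw [hne hq, Function.update_self]
  have hweight : ∑ p, logWeight (Function.update x i y p) =
      ∑ p, logWeight (x p) + (logWeight y - logWeight (x i)) := by
    rw [← Finset.add_sum_erase _ _ (Finset.mem_univ i), Function.update_self,
      Finset.sum_congr rfl fun p hp => by rw [hne hp],
      ← Finset.add_sum_erase Finset.univ (fun p => logWeight (x p)) (Finset.mem_univ i)]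
    ring
  simp only [weightedEnergy, hsplit (Function.update x i y), hsplit x, hpair, hrow, hweight]
  ring

variable {β : ℝ} {x : ι → E} {y : E}

lemma sum_erase_log_norm_sub_le [DecidableEq ι] (hx : Function.Injective x)
    (hmin : IsMinOn (weightedEnergy β) {z : ι → E | Function.Injective z} x)
    (hy : y ∉ Set.range x) (i : ι) :
    ∑ j ∈ Finset.univ.erase i, log ‖y - x j‖ ≤
      ∑ j, log ‖x i - x j‖ + β / 2 * (logWeight y - logWeight (x i)) := by
  have := isMinOn_iff.1 hmin _ (injective_update_of_notMem_range hx hy i)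
  rw [weightedEnergy_update] at this
  linarith

lemma card_sub_one_mul_sum_log_norm_sub_le (hx : Function.Injective x)
    (hmin : IsMinOn (weightedEnergy β) {z : ι → E | Function.Injective z} x)
    (hy : y ∉ Set.range x) :
    (Fintype.card ι - 1) * ∑ j, log ‖y - x j‖ ≤ ∑ i, ∑ j, log ‖x i - x j‖
      + β / 2 * (Fintype.card ι * logWeight y - ∑ i, logWeight (x i)) :=
  calc (Fintype.card ι - 1) * ∑ j, log ‖y - x j‖
      = ∑ i, ∑ j ∈ Finset.univ.erase i, log ‖y - x j‖ := by
        simp only [Finset.sum_erase_eq_sub (Finset.mem_univ _), Finset.sum_sub_distrib,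
          Finset.sum_const, Finset.card_univ, nsmul_eq_mul]
        ring
    _ ≤ ∑ i, (∑ j, log ‖x i - x j‖ + β / 2 * (logWeight y - logWeight (x i))) :=
        Finset.sum_le_sum fun i _ => sum_erase_log_norm_sub_le hx hmin hy i
    _ = _ := by
        simp only [Finset.sum_add_distrib, ← Finset.mul_sum, Finset.sum_sub_distrib,
          Finset.sum_const, Finset.card_univ, nsmul_eq_mul]

end Energy

section EmpiricalMeasure

/-- The uniform probability measure on the points of a tuple, counted with multiplicity. -/
noncomputable def empiricalMeasure {ι E : Type*} [Fintype ι] [MeasurableSpace E] (x : ι → E) :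
    Measure E :=
  (Fintype.card ι : ENNReal)⁻¹ • ∑ i, Measure.dirac (x i)

variable {ι E : Type*} [Fintype ι] [MeasurableSpace E]

instance [Nonempty ι] (x : ι → E) : IsProbabilityMeasure (empiricalMeasure x) where
  measure_univ := by
    simp [empiricalMeasure, Measure.finsetSum_apply, ENNReal.inv_mul_cancel]

variable [MeasurableSingletonClass E]

lemma integrable_empiricalMeasure [Nonempty ι] (x : ι → E) (f : E → ℝ) :
    Integrable f (empiricalMeasure x) :=
  (integrable_finsetSum_measure.2 fun _ _ => integrable_dirac (by simp)).smul_measure (by simp)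

lemma integral_empiricalMeasure (x : ι → E) (f : E → ℝ) :
    ∫ a, f a ∂empiricalMeasure x = (Fintype.card ι : ℝ)⁻¹ * ∑ i, f (x i) := by
  rw [empiricalMeasure, integral_smul_measure,
    integral_finsetSum_measure fun _ _ => integrable_dirac (by simp)]
  simp

end EmpiricalMeasure

section Minimizers

variable {m : ℕ} {β : ℝ} {x : Fin (m + 1) → ℂ}

lemma logPotential_empiricalMeasure_sub_le (hm : 1 ≤ m) (hβ : m ≤ β)
    (hx : Function.Injective x)
    (hmin : IsMinOn (weightedEnergy β) {z : Fin (m + 1) → ℂ | Function.Injective z} x) {y : ℂ}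
    (hy : y ∉ Set.range x) :
    logPotential (empiricalMeasure x) y - logWeight y / 2
        - ((∫ a, logWeight a ∂empiricalMeasure x) / 2 - 1 / 2) ≤
      (β - m) / (2 * m) * logWeight y + (1 + log m) / (m + 1) := by
  have hpot := card_sub_one_mul_sum_log_norm_sub_le hx hmin hy
  have hpair : ∑ i, ∑ j, log ‖x i - x j‖ ≤ m * ∑ i, logWeight (x i) - sumLogChoose m :=
    sum_log_norm_sub_le hx
  have hchoose := le_sumLogChoose m
  have hweight : 0 ≤ (β - m) * ∑ i, logWeight (x i) :=
    mul_nonneg (sub_nonneg.2 hβ) (Finset.sum_nonneg fun i _ => logWeight_nonneg _)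
  rw [logPotential, integral_empiricalMeasure, integral_empiricalMeasure]
  simp only [Fintype.card_fin, Nat.cast_add, Nat.cast_one, add_sub_cancel_right] at hpot ⊢
  rw [← sub_nonneg]
  have hscale : 0 ≤ (2 * m * (m + 1) : ℝ)⁻¹ := by positivity
  refine (mul_nonneg hscale (?_ : 0 ≤ β * (m + 1) * logWeight y + m * ∑ i, logWeight (x i)
    - m * (m + 1) + 2 * m * (1 + log m) - 2 * m * ∑ j, log ‖y - x j‖)).trans_eq ?_
  · linarith
  · have : (m : ℝ) ≠ 0 := Nat.cast_ne_zero.2 (Nat.one_le_iff_ne_zero.1 hm)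
    field_simp
    ring

lemma integral_abs_le_two_mul_of_integral_eq_zero {α : Type*} [MeasurableSpace α] {μ : Measure α}
    {f g : α → ℝ} (hf : Integrable f μ) (hf₀ : ∫ a, f a ∂μ = 0) (hg : Integrable g μ)
    (hg₀ : 0 ≤ᵐ[μ] g) (hfg : f ≤ᵐ[μ] g) : ∫ a, |f a| ∂μ ≤ 2 * ∫ a, g a ∂μ :=
  calc ∫ a, |f a| ∂μ ≤ ∫ a, (2 * g a - f a) ∂μ := by
        refine integral_mono_ae hf.abs ((hg.const_mul 2).sub hf) ?_
        filter_upwards [hg₀, hfg] with a (h₀ : 0 ≤ g a) h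
        exact abs_le'.2 ⟨by linarith, by linarith⟩
    _ = 2 * ∫ a, g a ∂μ := by
        rw [integral_sub (hg.const_mul 2) hf, integral_const_mul, hf₀, sub_zero]

lemma integral_abs_logPotential_empiricalMeasure_sub_le (hm : 1 ≤ m) (hβ : m ≤ β)
    (hx : Function.Injective x)
    (hmin : IsMinOn (weightedEnergy β) {z : Fin (m + 1) → ℂ | Function.Injective z} x) :
    ∫ z, |logPotential (empiricalMeasure x) z - logPotential (sphericalMeasure 1) z
        - ((∫ a, logWeight a ∂empiricalMeasure x) / 2 - 1 / 2)| ∂sphericalMeasure 1 ≤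
      2 * ((β - m) / (2 * m) + (1 + log m) / (m + 1)) := by
  have hweight := integrable_logWeight
  have hpot := integrable_logPotential (integrable_empiricalMeasure x logWeight)
  have hlog : 0 ≤ (1 + log m) / (m + 1) :=
    div_nonneg (add_nonneg zero_le_one (log_natCast_nonneg m)) (by positivity)
  have hδ : 0 ≤ (β - m) / (2 * m) := div_nonneg (sub_nonneg.2 hβ) (by positivity)
  have hrange : ∀ᵐ z ∂sphericalMeasure 1, z ∉ Set.range x :=
    (withDensity_absolutelyContinuous _ _).ae_le
      (measure_eq_zero_iff_ae_notMem.1 ((Set.finite_range x).measure_zero volume))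
  simp only [logPotential_sphericalMeasure_one]
  refine (integral_abs_le_two_mul_of_integral_eq_zero
    (g := fun z => (β - m) / (2 * m) * logWeight z + (1 + log m) / (m + 1))
    ((hpot.sub (hweight.div_const 2)).sub (integrable_const _)) ?_
    ((hweight.const_mul _).add (integrable_const _)) (.of_forall fun z => ?_) ?_).trans_eq ?_
  · rw [integral_sub' (hpot.sub (hweight.div_const 2)) (integrable_const _),
      integral_sub' hpot (hweight.div_const 2),
      integral_logPotential (integrable_empiricalMeasure x logWeight), integral_div,
      integral_logWeight, integral_const, probReal_univ, one_smul]
    exact sub_self _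
  · exact add_nonneg (mul_nonneg hδ (logWeight_nonneg z)) hlog
  · filter_upwards [hrange] with z hz
    exact logPotential_empiricalMeasure_sub_le hm hβ hx hmin hz
  · rw [integral_add (hweight.const_mul _) (integrable_const _), integral_const_mul,
      integral_logWeight, integral_const, probReal_univ, one_smul, mul_one]

lemma tendsto_sub_div_two_mul_add_log_div {β : ℕ → ℝ}
    (hβ : Tendsto (fun m : ℕ => β m / (m + 1)) atTop (nhds 1)) :
    Tendsto (fun m : ℕ => 2 * ((β m - m) / (2 * m) + (1 + log m) / (m + 1))) atTop (nhds 0) := by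
  have hratio : Tendsto (fun m : ℕ => (m : ℝ) / (m + 1)) atTop (nhds 1) :=
    tendsto_natCast_div_add_atTop 1
  have hlog : Tendsto (fun m : ℕ => log m / m) atTop (nhds 0) :=
    (isLittleO_log_id_atTop.tendsto_div_nhds_zero).comp tendsto_natCast_atTop_atTop
  have hlim : Tendsto (fun m : ℕ => β m / (m + 1) / (m / (m + 1)) - 1
      + 2 * (1 / ((m : ℝ) + 1) + log m / m * (m / (m + 1)))) atTop
      (nhds (1 / 1 - 1 + 2 * (0 + 0 * 1))) :=
    ((hβ.div hratio one_ne_zero).sub_const 1).add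
      ((tendsto_one_div_add_atTop_nhds_zero_nat.add (hlog.mul hratio)).const_mul 2)
  norm_num at hlim
  refine hlim.congr' ?_
  filter_upwards [eventually_gt_atTop 0] with m hm
  have : (m : ℝ) ≠ 0 := by exact_mod_cast hm.ne'
  field_simp

theorem tendsto_empiricalMeasure_of_isMinOn {β : ℕ → ℝ} {x : (m : ℕ) → Fin (m + 1) → ℂ}
    (hβ : ∀ᶠ m : ℕ in atTop, m ≤ β m) (hβ' : Tendsto (fun m : ℕ => β m / (m + 1)) atTop (nhds 1))
    (hmin : ∀ᶠ m in atTop, Function.Injective (x m) ∧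
      IsMinOn (weightedEnergy (β m)) {z | Function.Injective z} (x m)) :
    Tendsto (β := ProbabilityMeasure ℂ) (fun m => ⟨empiricalMeasure (x m), inferInstance⟩) atTop
      (nhds ⟨sphericalMeasure 1, inferInstance⟩) := by
  refine tendsto_of_tendsto_integral_abs_logPotential_sub
    (μ := fun m => ⟨empiricalMeasure (x m), inferInstance⟩)
    (μ₀ := ⟨sphericalMeasure 1, inferInstance⟩)
    (κ := fun m => (∫ a, logWeight a ∂empiricalMeasure (x m)) / 2 - 1 / 2)
    (fun m => integrable_empiricalMeasure (x m) logWeight) integrable_logWeight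
    (squeeze_zero' (.of_forall fun m => integral_nonneg fun z => abs_nonneg _) ?_
      (tendsto_sub_div_two_mul_add_log_div hβ'))
  filter_upwards [eventually_ge_atTop 1, hβ, hmin] with m hm hβm ⟨hxm, hminm⟩
  exact integral_abs_logPotential_empiricalMeasure_sub_le hm hβm hxm hminm

end Minimizers

section EuclideanPlane

lemma weightedEnergy_comp_linearIsometry {ι E F : Type*} [Fintype ι] [NormedAddCommGroup E]
    [NormedAddCommGroup F] [NormedSpace ℝ E] [NormedSpace ℝ F] (β : ℝ) (e : E →ₗᵢ[ℝ] F)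
    (x : ι → E) : weightedEnergy β (e ∘ x) = weightedEnergy β x := by
  simp [weightedEnergy, logWeight, ← map_sub]

lemma isMinOn_weightedEnergy_comp {ι E F : Type*} [Fintype ι] [NormedAddCommGroup E]
    [NormedAddCommGroup F] [NormedSpace ℝ E] [NormedSpace ℝ F] {β : ℝ} (e : E ≃ₗᵢ[ℝ] F)
    {x : ι → E} (hx : IsMinOn (weightedEnergy β) {z : ι → E | Function.Injective z} x) :
    IsMinOn (weightedEnergy β) {z : ι → F | Function.Injective z} (e ∘ x) :=
  isMinOn_iff.2 fun z hz =>
    calc weightedEnergy β (e ∘ x) = weightedEnergy β x :=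
          weightedEnergy_comp_linearIsometry β e.toLinearIsometry x
      _ ≤ weightedEnergy β (e.symm ∘ z) := isMinOn_iff.1 hx _ (e.symm.injective.comp hz)
      _ = weightedEnergy β z := weightedEnergy_comp_linearIsometry β e.symm.toLinearIsometry z

lemma integral_muV (f : EuclideanSpace ℝ (Fin 2) → ℝ) :
    ∫ a, f a ∂muV = ∫ z, f (Complex.orthonormalBasisOneI.repr z) ∂sphericalMeasure 1 := by
  have hdensity : Measurable fun a : EuclideanSpace ℝ (Fin 2) => 1 / (π * (1 + ‖a‖ ^ 2) ^ 2) := by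
    fun_prop
  have he := Complex.orthonormalBasisOneI.repr.measurePreserving
  rw [muV, integral_withDensity_eq_integral_toReal_smul hdensity.ennreal_ofReal (by simp),
    integral_sphericalMeasure one_pos,
    ← he.integral_comp Complex.orthonormalBasisOneI.repr.toHomeomorph.measurableEmbedding]
  refine integral_congr_ae (.of_forall fun z => ?_)
  simp only [LinearIsometryEquiv.norm_map, sphericalDensity]
  rw [ENNReal.toReal_ofReal (by positivity)]

theorem empirical_measures_converge_general {β : ℕ → ℝ}
    (hβ : ∀ᶠ n : ℕ in atTop, (n : ℝ) - 1 ≤ β n)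
    (hβ' : Tendsto (fun n : ℕ => β n / n) atTop (nhds 1))
    {x : (n : ℕ) → Fin n → EuclideanSpace ℝ (Fin 2)}
    (hmin : ∀ᶠ n in atTop, Function.Injective (x n) ∧
      IsMinOn (weightedEnergy (β n)) {z | Function.Injective z} (x n))
    (f : BoundedContinuousFunction (EuclideanSpace ℝ (Fin 2)) ℝ) :
    Tendsto (fun n : ℕ => (1 / (n : ℝ)) * ∑ i : Fin n, f (x n i)) atTop
      (nhds (∫ a, f a ∂muV)) := by
  let e : ℂ ≃ₗᵢ[ℝ] EuclideanSpace ℝ (Fin 2) := Complex.orthonormalBasisOneI.repr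
  have hshift := tendsto_add_atTop_nat 1
  have hlim := tendsto_empiricalMeasure_of_isMinOn (β := fun m => β (m + 1))
    (x := fun m => e.symm ∘ x (m + 1))
    ((hshift.eventually hβ).mono fun m hm => by simpa using hm)
    (by exact_mod_cast hβ'.comp hshift)
    ((hshift.eventually hmin).mono fun m hm =>
      ⟨e.symm.injective.comp hm.1, isMinOn_weightedEnergy_comp e.symm hm.2⟩)
  have hint := ProbabilityMeasure.tendsto_iff_forall_integral_tendsto.1 hlim
    (f.compContinuous ⟨e, e.continuous⟩)
  rw [← tendsto_add_atTop_iff_nat 1, integral_muV]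
  simpa [integral_empiricalMeasure] using hint

end EuclideanPlane

section Hamiltonian

lemma isMinOn_of_ite_coe_le {α : Type*} {p : α → Prop} [DecidablePred p] {f : α → ℝ} {a : α}
    (hp : ∃ z, p z)
    (h : ∀ z, (if p a then (f a : EReal) else ⊤) ≤ if p z then (f z : EReal) else ⊤) :
    p a ∧ IsMinOn f {z | p z} a := by
  have ha : p a := by
    by_contra ha
    obtain ⟨z, hz⟩ := hp
    have := h z
    rw [if_neg ha, if_pos hz] at this
    exact EReal.coe_ne_top _ (top_le_iff.1 this)
  refine ⟨ha, isMinOn_iff.2 fun z (hz : p z) => ?_⟩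
  have := h z
  rwa [if_pos ha, if_pos hz, EReal.coe_le_coe_iff] at this

lemma weightedEnergy_eq {n : ℕ} (β : ℝ) (x : Fin n → EuclideanSpace ℝ (Fin 2)) :
    weightedEnergy β x = -∑ i, ∑ j, (if i ≠ j then log (dist (x i) (x j)) else 0)
      + β * ∑ i, log (1 + ‖x i‖ ^ 2) := by
  have hdiag (i j : Fin n) : (if i ≠ j then log (dist (x i) (x j)) else 0) = log ‖x i - x j‖ := by
    split_ifs with h
    · rw [dist_eq_norm]
    · simp [not_not.1 h]
  simp only [weightedEnergy, hdiag, logWeight]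

lemma exists_injective_fin (n : ℕ) :
    ∃ z : Fin n → EuclideanSpace ℝ (Fin 2), Function.Injective z :=
  ⟨fun i => Infinite.natEmbedding _ i, (Infinite.natEmbedding _).injective.comp Fin.val_injective⟩

variable {n : ℕ} {x : Fin n → EuclideanSpace ℝ (Fin 2)}

lemma isMinOn_weightedEnergy_of_wbarHamE_le (h : ∀ z, wbarHamE n x ≤ wbarHamE n z) :
    Function.Injective x ∧ IsMinOn (weightedEnergy (n - 1)) {z | Function.Injective z} x :=
  isMinOn_of_ite_coe_le (exists_injective_fin n)
    (by simpa only [weightedEnergy_eq, wbarHamE] using h)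

lemma isMinOn_weightedEnergy_of_wHamE_le (h : ∀ z, wHamE n x ≤ wHamE n z) :
    Function.Injective x ∧ IsMinOn (weightedEnergy n) {z | Function.Injective z} x :=
  isMinOn_of_ite_coe_le (exists_injective_fin n) (by simpa only [weightedEnergy_eq, wHamE] using h)

lemma tendsto_natCast_sub_div (c : ℝ) :
    Tendsto (fun n : ℕ => ((n : ℝ) - c) / n) atTop (nhds 1) := by
  have hlim := (tendsto_const_div_atTop_nhds_zero_nat c).const_sub 1
  rw [sub_zero] at hlim
  refine hlim.congr' ?_
  filter_upwards [eventually_ne_atTop 0] with n hn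
  rw [sub_div, div_self (Nat.cast_ne_zero.2 hn)]

end Hamiltonian

/-- If for every `n ≥ 2` the tuple `(x₁ⁿ,…,xₙⁿ)` minimizes `w̄_n` (or, alternatively, `w_n`),
then the empirical measures `(1/n) ∑ δ_{xᵢⁿ}` converge weakly to `μ_V`. -/
theorem empirical_measures_converge
    (x : (n : ℕ) → Fin n → EuclideanSpace ℝ (Fin 2))
    (hmin : (∀ n, 2 ≤ n → ∀ z : Fin n → EuclideanSpace ℝ (Fin 2),
              wbarHamE n (x n) ≤ wbarHamE n z) ∨
            (∀ n, 2 ≤ n → ∀ z : Fin n → EuclideanSpace ℝ (Fin 2),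
              wHamE n (x n) ≤ wHamE n z)) :
    ∀ f : BoundedContinuousFunction (EuclideanSpace ℝ (Fin 2)) ℝ,
      Tendsto (fun n : ℕ => (1 / (n : ℝ)) * ∑ i : Fin n, f (x n i)) atTop
        (nhds (∫ a, f a ∂muV)) := by
  intro f
  have hlarge := eventually_ge_atTop 2
  rcases hmin with hbar | hw
  · exact empirical_measures_converge_general (.of_forall fun _ => le_rfl)
      (tendsto_natCast_sub_div 1)
      (hlarge.mono fun n hn => isMinOn_weightedEnergy_of_wbarHamE_le (hbar n hn)) f
  · exact empirical_measures_converge_general (.of_forall fun n => sub_le_self _ zero_le_one)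
      (by simpa using tendsto_natCast_sub_div 0)
      (hlarge.mono fun n hn => isMinOn_weightedEnergy_of_wHamE_le (hw n hn)) f
end

section
/- For every n ≥ 2 there exists an n-tuple (x̄₁,…,x̄ₙ) ∈ (ℝ²)ⁿ which minimizes w̄_n over (ℝ²)ⁿ and which satisfies (1/n)∑_{i=1}^n log(1+|x̄ᵢ|²) = ∫_{ℝ²} log(1+|x|²) dμ_V(x) = 1. -/
open Real Classical Filter MeasureTheory

/-!
In homogeneous coordinates on the Riemann sphere `ℂP¹`, the Hamiltonian is
`-∑_{i ≠ j} log χ(xᵢ, xⱼ)`, where `χ` is the chordal distance: minimizing it means maximizing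
`∏_{i ≠ j} χ`, which is possible by compactness of the sphere, and the maximum is invariant under
rotations. Since `1 + |x|² = χ(x, ∞)⁻²`, the remaining task is to rotate a maximizer `(vᵢ)` so that
the new pole `u` satisfies `∏ᵢ χ(u, vᵢ)² = e⁻ⁿ`. This product vanishes at `u = v₁`. It is at least
`e⁻ⁿ` somewhere: the mean over the sphere of `log χ(u, v)²` is `-1` for every `v`, and on each
circle `|u| = r` the maximum principle provides a point where the product is at least its geometric
mean over that circle, so some radius gives at least the geometric mean over the whole sphere.
The intermediate value theorem on the connected sphere gives the pole.
-/

section ChordalDist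

variable {E F : Type*} [NormedAddCommGroup E] [NormedAddCommGroup F]

/-- Half the Euclidean distance between the inverse stereographic projections of `x` and `y` to the
unit sphere. -/
noncomputable def chordalDist (x y : E) : ℝ :=
  dist x y / (√(1 + ‖x‖ ^ 2) * √(1 + ‖y‖ ^ 2))

lemma chordalDist_pos {x y : E} (h : x ≠ y) : 0 < chordalDist x y := by
  have := dist_pos.2 h
  unfold chordalDist
  positivity

lemma chordalDist_self (x : E) : chordalDist x x = 0 := by simp [chordalDist]

lemma chordalDist_map_linearIsometryEquiv [Module ℝ E] [Module ℝ F] (e : E ≃ₗᵢ[ℝ] F) (x y : E) :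
    chordalDist (e x) (e y) = chordalDist x y := by
  simp [chordalDist]

lemma log_chordalDist {x y : E} (h : x ≠ y) :
    log (chordalDist x y) = log (dist x y) - (log (1 + ‖x‖ ^ 2) + log (1 + ‖y‖ ^ 2)) / 2 := by
  have hdist := dist_ne_zero.2 h
  rw [chordalDist, log_div hdist (by positivity), log_mul (by positivity) (by positivity),
    log_sqrt (by positivity), log_sqrt (by positivity)]
  ring

end ChordalDist

section Energy

variable {ι : Type*} [Fintype ι]

lemma sum_offDiag_univ [DecidableEq ι] {M : Type*} [AddCommMonoid M] (f : ι → ι → M) :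
    ∑ p ∈ Finset.univ.offDiag, f p.1 p.2 = ∑ i, ∑ j, if i ≠ j then f i j else 0 := by
  simp_rw [← Finset.sum_filter]
  exact Finset.sum_finset_product' _ _ _ (by simp)

lemma sum_offDiag_univ_add (f : ι → ℝ) :
    ∑ p ∈ Finset.univ.offDiag, (f p.1 + f p.2) = 2 * ((Fintype.card ι - 1) * ∑ i, f i) := by
  have hite (i j : ι) : (if i ≠ j then f i + f j else 0)
      = f i + f j - if i = j then 2 * f i else 0 := by
    split_ifs <;> grind
  rw [sum_offDiag_univ fun i j => f i + f j]
  simp only [hite, Finset.sum_sub_distrib, Finset.sum_add_distrib, Finset.sum_ite_eq,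
    Finset.mem_univ, if_true, Finset.sum_const, Finset.card_univ, nsmul_eq_mul, ← Finset.mul_sum]
  ring

lemma prod_offDiag_chordalDist_pos_iff {E : Type*} [NormedAddCommGroup E] (x : ι → E) :
    0 < ∏ p ∈ Finset.univ.offDiag, chordalDist (x p.1) (x p.2) ↔ Function.Injective x := by
  refine ⟨fun hpos i j hij => ?_, fun hx => Finset.prod_pos fun p hp =>
    chordalDist_pos (hx.ne (Finset.mem_offDiag.1 hp).2.2)⟩
  by_contra hne
  refine hpos.ne' (Finset.prod_eq_zero (i := (i, j)) (by simpa using hne) ?_)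
  rw [hij, chordalDist_self]

lemma wbarHamE_of_injective {n : ℕ} {x : Fin n → EuclideanSpace ℝ (Fin 2)}
    (hx : Function.Injective x) :
    wbarHamE n x
      = ((-log (∏ p ∈ Finset.univ.offDiag, chordalDist (x p.1) (x p.2)) : ℝ) : EReal) := by
  have hne : ∀ p ∈ Finset.univ.offDiag, x p.1 ≠ x p.2 := fun p hp =>
    hx.ne (Finset.mem_offDiag.1 hp).2.2
  rw [wbarHamE, if_pos hx, log_prod fun p hp => (chordalDist_pos (hne p hp)).ne',
    Finset.sum_congr rfl fun p hp => log_chordalDist (hne p hp), Finset.sum_sub_distrib,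
    ← Finset.sum_div, sum_offDiag_univ_add fun i => log (1 + ‖x i‖ ^ 2),
    sum_offDiag_univ fun i j => log (dist (x i) (x j)), Fintype.card_fin]
  congr 1
  ring

lemma wbarHamE_le_of_prod_chordalDist_le {n : ℕ} {x z : Fin n → EuclideanSpace ℝ (Fin 2)}
    (h : ∏ p ∈ Finset.univ.offDiag, chordalDist (z p.1) (z p.2)
      ≤ ∏ p ∈ Finset.univ.offDiag, chordalDist (x p.1) (x p.2)) :
    wbarHamE n x ≤ wbarHamE n z := by
  by_cases hz : Function.Injective z
  · have hpos := (prod_offDiag_chordalDist_pos_iff z).2 hz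
    have hx := (prod_offDiag_chordalDist_pos_iff x).1 (hpos.trans_le h)
    rw [wbarHamE_of_injective hx, wbarHamE_of_injective hz, EReal.coe_le_coe_iff]
    exact neg_le_neg (log_le_log hpos h)
  · simp [wbarHamE, hz]

end Energy

local notation "ℂ²" => EuclideanSpace ℂ (Fin 2)

section ProjectiveLine

/-- The complex area form on `ℂ²`, which vanishes exactly on pairs of collinear vectors. -/
def wedge (u v : ℂ²) : ℂ := u 0 * v 1 - u 1 * v 0

/-- The chordal distance on the Riemann sphere `ℂP¹`, in homogeneous coordinates; it is `0` when
one of the vectors is `0`. -/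
noncomputable def projChordalDist (u v : ℂ²) : ℝ := ‖wedge u v‖ / (‖u‖ * ‖v‖)

/-- The affine coordinate of the point `[v]` of `ℂP¹` for which `[u]` is the point at infinity: the
stereographic projection of `[v]` from `[u]`. It is `0` when `v` is a multiple of `u`. -/
noncomputable def stereoCoord (u v : ℂ²) : ℂ := inner ℂ u v / wedge u v

lemma norm_sq_eq_add (v : ℂ²) : ‖v‖ ^ 2 = ‖v 0‖ ^ 2 + ‖v 1‖ ^ 2 := by
  rw [EuclideanSpace.norm_sq_eq, Fin.sum_univ_two]

@[simp]
lemma wedge_self (v : ℂ²) : wedge v v = 0 := by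
  rw [wedge]
  ring

lemma inner_eq_add (u v : ℂ²) :
    inner ℂ u v = v 0 * (starRingEnd ℂ) (u 0) + v 1 * (starRingEnd ℂ) (u 1) := by
  simp [PiLp.inner_apply]

lemma norm_inner_sq_add_norm_wedge_sq (u v : ℂ²) :
    ‖inner ℂ u v‖ ^ 2 + ‖wedge u v‖ ^ 2 = ‖u‖ ^ 2 * ‖v‖ ^ 2 := by
  simp only [inner_eq_add, wedge, norm_sq_eq_add, ← Complex.normSq_eq_norm_sq,
    Complex.normSq_apply, Complex.add_re, Complex.add_im, Complex.sub_re, Complex.sub_im,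
    Complex.mul_re, Complex.mul_im, Complex.conj_re, Complex.conj_im]
  ring

lemma inner_mul_wedge_sub_inner_mul_wedge (u v w : ℂ²) :
    inner ℂ u v * wedge u w - inner ℂ u w * wedge u v = (‖u‖ ^ 2 : ℝ) * wedge v w := by
  simp only [inner_eq_add, wedge, norm_sq_eq_add, Complex.ofReal_add, Complex.ofReal_pow,
    ← Complex.mul_conj']
  ring

lemma ne_zero_of_wedge_ne_zero {u v : ℂ²} (h : wedge u v ≠ 0) : u ≠ 0 ∧ v ≠ 0 := by
  constructor <;> rintro rfl <;> simp [wedge] at h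

lemma wedge_ne_zero_of_projChordalDist_ne_zero {u v : ℂ²} (h : projChordalDist u v ≠ 0) :
    wedge u v ≠ 0 := by
  contrapose! h
  simp [projChordalDist, h]

lemma one_add_norm_stereoCoord_sq {u v : ℂ²} (h : wedge u v ≠ 0) :
    1 + ‖stereoCoord u v‖ ^ 2 = (projChordalDist u v ^ 2)⁻¹ := by
  have hwedge := norm_ne_zero_iff.2 h
  rw [stereoCoord, projChordalDist, norm_div, div_pow, div_pow, inv_div, mul_pow,
    ← norm_inner_sq_add_norm_wedge_sq]
  field_simp
  ring

lemma dist_stereoCoord {u v w : ℂ²} (hv : wedge u v ≠ 0) (hw : wedge u w ≠ 0) :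
    dist (stereoCoord u v) (stereoCoord u w)
      = ‖u‖ ^ 2 * ‖wedge v w‖ / (‖wedge u v‖ * ‖wedge u w‖) := by
  rw [dist_eq_norm, stereoCoord, stereoCoord, div_sub_div _ _ hv hw, mul_comm (wedge u v),
    inner_mul_wedge_sub_inner_mul_wedge, norm_div, norm_mul, norm_mul, Complex.norm_real,
    norm_of_nonneg (by positivity)]

lemma chordalDist_stereoCoord {u v w : ℂ²} (hv : wedge u v ≠ 0) (hw : wedge u w ≠ 0) :
    chordalDist (stereoCoord u v) (stereoCoord u w) = projChordalDist v w := by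
  have hu₀ := norm_ne_zero_iff.2 (ne_zero_of_wedge_ne_zero hv).1
  have hv' := norm_ne_zero_iff.2 hv
  have hw' := norm_ne_zero_iff.2 hw
  have hsqrt {v : ℂ²} (h : wedge u v ≠ 0) :
      √(1 + ‖stereoCoord u v‖ ^ 2) = ‖u‖ * ‖v‖ / ‖wedge u v‖ := by
    rw [one_add_norm_stereoCoord_sq h, sqrt_inv, sqrt_sq (by unfold projChordalDist; positivity),
      projChordalDist, inv_div]
  rw [chordalDist, hsqrt hv, hsqrt hw, dist_stereoCoord hv hw, projChordalDist]
  field_simp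

lemma exists_chordalDist_eq_projChordalDist {ι : Type*} (z : ι → ℂ) :
    ∃ v : ι → ℂ², (∀ i, v i ≠ 0) ∧
      ∀ i j, chordalDist (z i) (z j) = projChordalDist (v i) (v j) := by
  have hwedge (c : ℂ) : wedge !₂[1, 0] !₂[c, 1] ≠ 0 := by simp [wedge]
  have hcoord (c : ℂ) : stereoCoord !₂[1, 0] !₂[c, 1] = c := by
    simp [stereoCoord, inner_eq_add, wedge]
  refine ⟨fun i => !₂[z i, 1], fun i => (ne_zero_of_wedge_ne_zero (hwedge _)).2, fun i j => ?_⟩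
  rw [← chordalDist_stereoCoord (hwedge _) (hwedge _), hcoord, hcoord]

lemma projChordalDist_smul_smul {c d : ℂ} (hc : c ≠ 0) (hd : d ≠ 0) (u v : ℂ²) :
    projChordalDist (c • u) (d • v) = projChordalDist u v := by
  have hc' := norm_ne_zero_iff.2 hc
  have hd' := norm_ne_zero_iff.2 hd
  have hwedge : wedge (c • u) (d • v) = c * d * wedge u v := by
    simp only [wedge, PiLp.smul_apply, smul_eq_mul]
    ring
  simp only [projChordalDist, hwedge, norm_mul, norm_smul]
  rw [mul_mul_mul_comm, mul_div_mul_left _ _ (mul_ne_zero hc' hd')]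

lemma continuousOn_projChordalDist {X : Type*} [TopologicalSpace X] {f g : X → ℂ²} {s : Set X}
    (hf : ContinuousOn f s) (hg : ContinuousOn g s) (hf₀ : ∀ x ∈ s, f x ≠ 0)
    (hg₀ : ∀ x ∈ s, g x ≠ 0) : ContinuousOn (fun x => projChordalDist (f x) (g x)) s := by
  unfold projChordalDist wedge
  refine ContinuousOn.div (by fun_prop) (by fun_prop) fun x hx => ?_
  exact mul_ne_zero (norm_ne_zero_iff.2 (hf₀ x hx)) (norm_ne_zero_iff.2 (hg₀ x hx))

lemma exists_prod_projChordalDist_max (ι : Type*) [Fintype ι] :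
    ∃ v : ι → ℂ², (∀ i, v i ≠ 0) ∧ ∀ u : ι → ℂ², (∀ i, u i ≠ 0) →
      ∏ p ∈ Finset.univ.offDiag, projChordalDist (u p.1) (u p.2)
        ≤ ∏ p ∈ Finset.univ.offDiag, projChordalDist (v p.1) (v p.2) := by
  set K : Set (ι → ℂ²) := Set.univ.pi fun _ => Metric.sphere 0 1
  have hK : IsCompact K := isCompact_univ_pi fun _ => isCompact_sphere 0 1
  have hK_ne : ∀ v ∈ K, ∀ i, v i ≠ 0 := fun v hv i =>
    ne_zero_of_mem_unit_sphere ⟨v i, hv i (Set.mem_univ i)⟩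
  obtain ⟨v, hv, hmax⟩ := hK.exists_isMaxOn
    (f := fun v => ∏ p ∈ Finset.univ.offDiag, projChordalDist (v p.1) (v p.2))
    (Set.univ_pi_nonempty_iff.2 fun _ => NormedSpace.sphere_nonempty.2 zero_le_one)
    (continuousOn_finsetProd _ fun p _ => continuousOn_projChordalDist (by fun_prop) (by fun_prop)
      (fun v hv => hK_ne v hv p.1) (fun v hv => hK_ne v hv p.2))
  refine ⟨v, hK_ne v hv, fun u hu => ?_⟩
  have hinv (i : ι) : (‖u i‖⁻¹ : ℂ) ≠ 0 := by simpa using hu i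
  have hmem : (fun i => (‖u i‖⁻¹ : ℂ) • u i) ∈ K := fun i _ => by
    simpa using norm_smul_inv_norm (𝕜 := ℂ) (hu i)
  simpa [projChordalDist_smul_smul, hinv] using hmax hmem

end ProjectiveLine

section Averaging

variable {ι : Type*} [Fintype ι]

lemma exists_differentiable_norm_eq_on_circle (a b : ℂ) {r : ℝ} (hr : 0 < r) :
    ∃ f : ℂ → ℂ, Differentiable ℂ f ∧ ‖f 0‖ = max (r * ‖b‖) ‖a‖ ∧
      ∀ z, ‖z‖ = r → ‖f z‖ = ‖z * b - a‖ := by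
  rcases le_total (r * ‖b‖) ‖a‖ with h | h
  · exact ⟨fun z => z * b - a, by fun_prop, by simp [h], fun z _ => rfl⟩
  · -- The zero `a / b` lies in the disc: reflect it across the circle.
    refine ⟨fun z => r * starRingEnd ℂ b - starRingEnd ℂ a * z / r, by fun_prop,
      by simp [h, abs_of_pos hr], fun z hz => ?_⟩
    have hrc : (r : ℂ) ≠ 0 := by exact_mod_cast hr.ne'
    have hzz : z * starRingEnd ℂ z = (r : ℂ) ^ 2 := by rw [Complex.mul_conj', hz]
    have hreflect :
        z * b - a = z / r * starRingEnd ℂ (r * starRingEnd ℂ b - starRingEnd ℂ a * z / r) := by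
      simp only [map_sub, map_mul, map_div₀, Complex.conj_conj, Complex.conj_ofReal]
      field_simp
      linear_combination a * hzz
    rw [hreflect, norm_mul, RCLike.norm_conj, norm_div, hz, Complex.norm_real,
      norm_of_nonneg hr.le, div_self hr.ne', one_mul]

lemma exists_norm_eq_prod_max_le_prod_norm (a b : ι → ℂ) {r : ℝ} (hr : 0 < r) :
    ∃ z : ℂ, ‖z‖ = r ∧ ∏ i, max (r * ‖b i‖) ‖a i‖ ≤ ∏ i, ‖z * b i - a i‖ := by
  choose f hf hf_zero hf_circle using
    fun i => exists_differentiable_norm_eq_on_circle (a i) (b i) hr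
  have hdiff : Differentiable ℂ fun z => ∏ i, f i z :=
    Differentiable.fun_finsetProd fun i _ => hf i
  obtain ⟨z, hz, hmax⟩ := Complex.exists_mem_frontier_isMaxOn_norm
    (Metric.isBounded_ball (x := (0 : ℂ)) (r := r)) ⟨0, Metric.mem_ball_self hr⟩
    hdiff.diffContOnCl
  have hzr : ‖z‖ = r := by simpa [frontier_ball _ hr.ne'] using hz
  refine ⟨z, hzr, ?_⟩
  simpa [norm_prod, hf_zero, hf_circle _ z hzr] using
    hmax (subset_closure (Metric.mem_ball_self hr))

/-- The geometric mean of `z ↦ χ((z, 1), v)²` over a circle centred at `0`, where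
`s = |v₁|² / |v|²` and the radius `|z|` enters through `t = |z|² / (1 + |z|²)`, which is uniformly
distributed on `[0, 1]` under the normalized area of the sphere. -/
noncomputable def circleGeomMean (s t : ℝ) : ℝ := max (t * s) ((1 - t) * (1 - s))

lemma circleGeomMean_pos {s t : ℝ} (hs : s ∈ Set.Icc 0 1) (ht : t ∈ Set.Ioo 0 1) :
    0 < circleGeomMean s t := by
  obtain ⟨ht₀, ht₁⟩ := ht
  rcases hs.1.eq_or_lt with rfl | hs₀
  · simp [circleGeomMean, ht₁]
  · exact lt_max_of_lt_left (mul_pos ht₀ hs₀)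

lemma eqOn_log_circleGeomMean_left {s : ℝ} (hs : s ∈ Set.Icc 0 1) :
    Set.EqOn (fun t => log (1 - t) + log (1 - s)) (fun t => log (circleGeomMean s t))
      (Set.uIoo 0 (1 - s)) := by
  rw [Set.uIoo_of_le (sub_nonneg.2 hs.2)]
  rintro t ⟨ht₀, ht₁⟩
  have hs₀ := hs.1
  simp only [circleGeomMean]
  rw [max_eq_right (by nlinarith), log_mul (by linarith) (by linarith)]

lemma eqOn_log_circleGeomMean_right {s : ℝ} (hs : s ∈ Set.Icc 0 1) :
    Set.EqOn (fun t => log t + log s) (fun t => log (circleGeomMean s t)) (Set.uIoo (1 - s) 1) := by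
  rw [Set.uIoo_of_le (sub_le_self 1 hs.1)]
  rintro t ⟨ht₀, ht₁⟩
  have hs₁ := hs.2
  simp only [circleGeomMean]
  rw [max_eq_left (by nlinarith), log_mul (by linarith) (by linarith)]

lemma intervalIntegrable_log_one_sub (a b : ℝ) :
    IntervalIntegrable (fun t => log (1 - t)) volume a b := by
  simpa using (intervalIntegral.intervalIntegrable_log' (a := 1 - a) (b := 1 - b)).comp_sub_left 1

lemma intervalIntegrable_log_circleGeomMean_left {s : ℝ} (hs : s ∈ Set.Icc 0 1) :
    IntervalIntegrable (fun t => log (circleGeomMean s t)) volume 0 (1 - s) :=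
  ((intervalIntegrable_log_one_sub 0 (1 - s)).add intervalIntegrable_const).congr_uIoo
    (eqOn_log_circleGeomMean_left hs)

lemma intervalIntegrable_log_circleGeomMean_right {s : ℝ} (hs : s ∈ Set.Icc 0 1) :
    IntervalIntegrable (fun t => log (circleGeomMean s t)) volume (1 - s) 1 :=
  (intervalIntegral.intervalIntegrable_log'.add intervalIntegrable_const).congr_uIoo
    (eqOn_log_circleGeomMean_right hs)

lemma integral_log_circleGeomMean {s : ℝ} (hs : s ∈ Set.Icc 0 1) :
    ∫ t in 0..1, log (circleGeomMean s t) = -1 := by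
  rw [← intervalIntegral.integral_add_adjacent_intervals
      (intervalIntegrable_log_circleGeomMean_left hs)
      (intervalIntegrable_log_circleGeomMean_right hs),
    ← intervalIntegral.integral_congr_uIoo (eqOn_log_circleGeomMean_left hs),
    ← intervalIntegral.integral_congr_uIoo (eqOn_log_circleGeomMean_right hs),
    intervalIntegral.integral_add (intervalIntegrable_log_one_sub _ _) intervalIntegrable_const,
    intervalIntegral.integral_add intervalIntegral.intervalIntegrable_log'
      intervalIntegrable_const,
    intervalIntegral.integral_comp_sub_left (fun t => log t) 1, integral_log, integral_log]
  simp only [sub_zero, log_one, mul_zero, sub_sub_cancel, zero_sub,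
    intervalIntegral.integral_const, smul_eq_mul, sub_add_sub_cancel]
  ring

lemma exists_exp_neg_card_le_prod_circleGeomMean {s : ι → ℝ} (hs : ∀ i, s i ∈ Set.Icc 0 1) :
    ∃ t ∈ Set.Ioo (0 : ℝ) 1, exp (-Fintype.card ι) ≤ ∏ i, circleGeomMean (s i) t := by
  have hint (i : ι) := (intervalIntegrable_log_circleGeomMean_left (hs i)).trans
    (intervalIntegrable_log_circleGeomMean_right (hs i))
  have hmean : ∫ t in Set.Ioc (0 : ℝ) 1, ∑ i, log (circleGeomMean (s i) t) = -Fintype.card ι := by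
    rw [← intervalIntegral.integral_of_le zero_le_one,
      intervalIntegral.integral_finsetSum fun i _ => hint i]
    simp [fun i => integral_log_circleGeomMean (hs i)]
  have : IsProbabilityMeasure (volume.restrict (Set.Ioc (0 : ℝ) 1)) := ⟨by simp⟩
  have hnull : volume.restrict (Set.Ioc (0 : ℝ) 1) (Set.Ioo 0 1)ᶜ = 0 := by
    simp [← restrict_Ioo_eq_restrict_Ioc, Measure.restrict_apply measurableSet_Ioo.compl]
  obtain ⟨t, ht, hle⟩ := exists_notMem_null_integral_le
    (integrable_finsetSum _ fun i _ =>
      (intervalIntegrable_iff_integrableOn_Ioc_of_le zero_le_one).1 (hint i)) hnull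
  rw [Set.notMem_compl_iff] at ht
  refine ⟨t, ht, ?_⟩
  rw [hmean] at hle
  calc exp (-Fintype.card ι) ≤ exp (∑ i, log (circleGeomMean (s i) t)) := exp_le_exp.2 hle
    _ = ∏ i, circleGeomMean (s i) t := by
      rw [exp_sum]
      exact Finset.prod_congr rfl fun i _ => exp_log (circleGeomMean_pos (hs i) ht)

end Averaging

section BalancedPole

variable {ι : Type*} [Fintype ι]

lemma circleGeomMean_eq_max_sq_div {v : ℂ²} (hv : v ≠ 0) {t r : ℝ} (hr : 0 ≤ r)
    (hrt : r ^ 2 = t / (1 - t)) (ht : t < 1) :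
    circleGeomMean (‖v 1‖ ^ 2 / ‖v‖ ^ 2) t
      = max (r * ‖v 1‖) ‖v 0‖ ^ 2 / ((1 + r ^ 2) * ‖v‖ ^ 2) := by
  have hv' := norm_ne_zero_iff.2 hv
  have ht' : 1 - t ≠ 0 := by linarith
  have hsq : max (r * ‖v 1‖) ‖v 0‖ ^ 2 = max ((r * ‖v 1‖) ^ 2) (‖v 0‖ ^ 2) :=
    pow_left_monotoneOn.map_max (mul_nonneg hr (norm_nonneg _)) (norm_nonneg _)
  have hden : 1 + r ^ 2 = 1 / (1 - t) := by
    rw [hrt]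
    field_simp
    ring
  rw [circleGeomMean, hsq, ← max_div_div_right (by positivity), hden, mul_pow, hrt]
  congr 1
  · field_simp
  · rw [← add_sub_cancel_right (‖v 0‖ ^ 2) (‖v 1‖ ^ 2), ← norm_sq_eq_add]
    field_simp

lemma exists_exp_neg_card_le_prod_projChordalDist_sq {v : ι → ℂ²} (hv : ∀ i, v i ≠ 0) :
    ∃ u : ℂ², u ≠ 0 ∧ exp (-Fintype.card ι) ≤ ∏ i, projChordalDist u (v i) ^ 2 := by
  have hs (i : ι) : ‖v i 1‖ ^ 2 / ‖v i‖ ^ 2 ∈ Set.Icc 0 1 := by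
    refine ⟨by positivity, div_le_one_of_le₀ ?_ (by positivity)⟩
    rw [norm_sq_eq_add]
    exact le_add_of_nonneg_left (by positivity)
  obtain ⟨t, ⟨ht₀, ht₁⟩, hle⟩ := exists_exp_neg_card_le_prod_circleGeomMean hs
  have hratio : 0 < t / (1 - t) := div_pos ht₀ (sub_pos.2 ht₁)
  obtain ⟨r, hr, hr_sq⟩ : ∃ r : ℝ, 0 < r ∧ r ^ 2 = t / (1 - t) :=
    ⟨√(t / (1 - t)), sqrt_pos.2 hratio, sq_sqrt hratio.le⟩
  obtain ⟨z, hz, hprod⟩ := exists_norm_eq_prod_max_le_prod_norm (fun i => v i 0) (fun i => v i 1) hr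
  refine ⟨!₂[z, 1], fun h => by simpa using congrArg (fun w : ℂ² => w 1) h, hle.trans ?_⟩
  calc ∏ i, circleGeomMean (‖v i 1‖ ^ 2 / ‖v i‖ ^ 2) t
      = (∏ i, max (r * ‖v i 1‖) ‖v i 0‖) ^ 2 / ∏ i, ((1 + r ^ 2) * ‖v i‖ ^ 2) := by
        rw [← Finset.prod_pow, ← Finset.prod_div_distrib]
        exact Finset.prod_congr rfl fun i _ =>
          circleGeomMean_eq_max_sq_div (hv i) hr.le hr_sq ht₁
    _ ≤ (∏ i, ‖z * v i 1 - v i 0‖) ^ 2 / ∏ i, ((1 + r ^ 2) * ‖v i‖ ^ 2) := by gcongr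
    _ = ∏ i, projChordalDist !₂[z, 1] (v i) ^ 2 := by
        rw [← Finset.prod_pow, ← Finset.prod_div_distrib]
        have hnorm : ‖!₂[z, 1]‖ ^ 2 = 1 + r ^ 2 := by simp [norm_sq_eq_add, hz, add_comm]
        simp [projChordalDist, wedge, div_pow, mul_pow, hnorm]

lemma exists_prod_projChordalDist_sq_eq [Nonempty ι] {v : ι → ℂ²} (hv : ∀ i, v i ≠ 0) :
    ∃ u : ℂ², ∏ i, projChordalDist u (v i) ^ 2 = exp (-Fintype.card ι) := by
  obtain ⟨u, hu, hle⟩ := exists_exp_neg_card_le_prod_projChordalDist_sq hv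
  obtain ⟨i⟩ := ‹Nonempty ι›
  have hzero : ∏ j, projChordalDist (v i) (v j) ^ 2 = 0 :=
    Finset.prod_eq_zero (Finset.mem_univ i) (by simp [projChordalDist])
  have hcont : ContinuousOn (fun u => ∏ j, projChordalDist u (v j) ^ 2) {0}ᶜ :=
    continuousOn_finsetProd _ fun j _ => (continuousOn_projChordalDist continuousOn_id
      continuousOn_const (fun _ h => h) fun _ _ => hv j).pow 2
  have hrank : 1 < Module.rank ℝ ℂ² :=
    Module.one_lt_rank_of_one_lt_finrank (by simp [finrank_real_of_complex])
  have hconn : IsPreconnected ({0}ᶜ : Set ℂ²) :=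
    (isConnected_compl_singleton_of_one_lt_rank hrank 0).isPreconnected
  obtain ⟨w, -, hw⟩ := hconn.intermediate_value (hv i) hu hcont
    ⟨hzero.trans_le (exp_pos _).le, hle⟩
  exact ⟨w, hw⟩

lemma exists_prod_chordalDist_max_and_sum_log_eq (ι : Type*) [Fintype ι] [Nonempty ι] :
    ∃ y : ι → ℂ,
      (∀ z : ι → ℂ, ∏ p ∈ Finset.univ.offDiag, chordalDist (z p.1) (z p.2)
        ≤ ∏ p ∈ Finset.univ.offDiag, chordalDist (y p.1) (y p.2)) ∧
      ∑ i, log (1 + ‖y i‖ ^ 2) = Fintype.card ι := by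
  obtain ⟨v, hv, hmax⟩ := exists_prod_projChordalDist_max ι
  obtain ⟨u, hu⟩ := exists_prod_projChordalDist_sq_eq hv
  have hprod_ne : ∏ i, projChordalDist u (v i) ^ 2 ≠ 0 := hu ▸ (exp_pos _).ne'
  have hfactor_ne (i : ι) : projChordalDist u (v i) ^ 2 ≠ 0 :=
    Finset.prod_ne_zero_iff.1 hprod_ne i (Finset.mem_univ i)
  have hwedge (i : ι) : wedge u (v i) ≠ 0 :=
    wedge_ne_zero_of_projChordalDist_ne_zero (pow_ne_zero_iff two_ne_zero |>.1 (hfactor_ne i))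
  refine ⟨fun i => stereoCoord u (v i), fun z => ?_, ?_⟩
  · obtain ⟨q, hq, hzq⟩ := exists_chordalDist_eq_projChordalDist z
    simpa only [hzq, chordalDist_stereoCoord (hwedge _) (hwedge _)] using hmax q hq
  · simp only [one_add_norm_stereoCoord_sq (hwedge _), log_inv, Finset.sum_neg_distrib]
    rw [← log_prod fun i _ => hfactor_ne i, hu, log_exp, neg_neg]

end BalancedPole

section EquilibriumMeasure

lemma hasDerivAt_neg_log_one_add_sq_add_one_div (y : ℝ) :
    HasDerivAt (fun y : ℝ => -(log (1 + y ^ 2) + 1) / (1 + y ^ 2))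
      (2 * y * log (1 + y ^ 2) / (1 + y ^ 2) ^ 2) y := by
  have hy : 1 + y ^ 2 ≠ 0 := by positivity
  have hsq : HasDerivAt (fun y : ℝ => 1 + y ^ 2) (2 * y) y := by
    simpa using (hasDerivAt_pow 2 y).const_add 1
  refine (((hsq.log hy).add_const 1).neg.div hsq hy).congr_deriv ?_
  simp only [Pi.neg_apply]
  field_simp
  ring

lemma tendsto_neg_log_one_add_sq_add_one_div_atTop :
    Tendsto (fun y : ℝ => -(log (1 + y ^ 2) + 1) / (1 + y ^ 2)) atTop (nhds 0) := by
  have hsq : Tendsto (fun y : ℝ => 1 + y ^ 2) atTop atTop :=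
    tendsto_atTop_add_const_left _ _ (tendsto_pow_atTop two_ne_zero)
  have hlog : Tendsto (fun w : ℝ => -(log w / w + w⁻¹)) atTop (nhds 0) := by
    simpa using (isLittleO_log_id_atTop.tendsto_div_nhds_zero.add tendsto_inv_atTop_zero).neg
  refine (hlog.comp hsq).congr fun y => ?_
  simp only [Function.comp_apply]
  ring

lemma integral_Ioi_mul_log_one_add_sq_div :
    ∫ y in Set.Ioi (0 : ℝ), 2 * y * log (1 + y ^ 2) / (1 + y ^ 2) ^ 2 = 1 := by
  rw [integral_Ioi_of_hasDerivAt_of_nonneg'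
    (fun y _ => hasDerivAt_neg_log_one_add_sq_add_one_div y) (fun y hy => ?_)
    tendsto_neg_log_one_add_sq_add_one_div_atTop]
  · simp
  · have hy₀ : 0 ≤ y := (Set.mem_Ioi.1 hy).le
    have hlog : 0 ≤ log (1 + y ^ 2) := log_nonneg (by nlinarith)
    positivity

lemma integral_muV_fun_norm (f : ℝ → ℝ) :
    ∫ a, f ‖a‖ ∂muV = ∫ y in Set.Ioi (0 : ℝ), 2 * y * f y / (1 + y ^ 2) ^ 2 := by
  have hball : (volume : Measure (EuclideanSpace ℝ (Fin 2))).real (Metric.ball 0 1) = π := by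
    simp [Measure.real, EuclideanSpace.volume_ball_fin_two, pi_pos.le]
  rw [muV, integral_withDensity_eq_integral_toReal_smul (by fun_prop) (by simp)]
  simp only [smul_eq_mul, ENNReal.toReal_ofReal
    (show 0 ≤ 1 / (π * (1 + ‖_‖ ^ 2) ^ 2) by positivity)]
  rw [integral_fun_norm_addHaar volume fun y : ℝ => 1 / (π * (1 + y ^ 2) ^ 2) * f y, hball,
    finrank_euclideanSpace_fin, nsmul_eq_mul, smul_eq_mul, ← integral_const_mul,
    ← integral_const_mul]
  congr 1 with y
  simp only [Nat.cast_ofNat, Nat.add_one_sub_one, pow_one, one_div, mul_inv_rev, smul_eq_mul]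
  field_simp

lemma integral_log_one_add_norm_sq_muV : ∫ a, log (1 + ‖a‖ ^ 2) ∂muV = 1 := by
  rw [integral_muV_fun_norm fun y => log (1 + y ^ 2), integral_Ioi_mul_log_one_add_sq_div]

end EquilibriumMeasure

/-- For every `n ≥ 2` there exists a minimizer `(x̄₁,…,x̄ₙ)` of `w̄_n` with
`(1/n) ∑ᵢ log(1+|x̄ᵢ|²) = ∫ log(1+|x|²) dμ_V = 1`. -/
theorem exists_balanced_minimizer (n : ℕ) (hn : 2 ≤ n) :
    ∃ x : Fin n → EuclideanSpace ℝ (Fin 2),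
      (∀ z : Fin n → EuclideanSpace ℝ (Fin 2), wbarHamE n x ≤ wbarHamE n z) ∧
      (1 / (n : ℝ)) * ∑ i : Fin n, Real.log (1 + ‖x i‖^2)
        = ∫ a, Real.log (1 + ‖a‖^2) ∂muV ∧
      ∫ a, Real.log (1 + ‖a‖^2) ∂muV = 1 := by
  have : Nonempty (Fin n) := ⟨⟨0, by omega⟩⟩
  obtain ⟨y, hmax, hsum⟩ := exists_prod_chordalDist_max_and_sum_log_eq (Fin n)
  let e := Complex.orthonormalBasisOneI.repr
  refine ⟨fun i => e (y i), fun z => wbarHamE_le_of_prod_chordalDist_le ?_, ?_,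
    integral_log_one_add_norm_sq_muV⟩
  · simpa only [chordalDist_map_linearIsometryEquiv] using hmax fun i => e.symm (z i)
  · have hn₀ : (n : ℝ) ≠ 0 := by positivity
    simp only [e.norm_map, hsum, Fintype.card_fin, integral_log_one_add_norm_sq_muV]
    field_simp
end
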